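/- arXiv:1607.00062 — 2 statements merged into one kernel-verified Lean document; each statement's English description precedes it below -/
import Mathlib

section
/- Let A be a Noetherian domain, let R = A[[x_1, ..., x_n]] be a power series ring over A, and let I = (x_1, ..., x_n) ⊆ R. Then for every finitely generated R-module M there exists a nonzero element g ∈ A such that for every i ≥ 0 the local cohomology module H^i_I(M) ⊗_A A_g is a free A_g-module. -/
open scoped TensorProduct

section
open CategoryTheory Limits Opposite
noncomputable section
namespace LC
variable {R : Type} [CommRing R]

abbrev Cx (X Y : ModuleCat.{0} R) : CochainComplex (ModuleCat.{0} R) ℕ :=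
  (projectiveResolution X).complex.linearYonedaObj R Y

/-- covariant map -/
def cxMap (X : ModuleCat.{0} R) {Y Y' : ModuleCat.{0} R} (f : Y ⟶ Y') : Cx X Y ⟶ Cx X Y' :=
  (HomologicalComplex.unopFunctor _ _).map
    (((NatTrans.mapHomologicalComplex (NatTrans.rightOp ((linearYoneda R _).map f)) _).app
      (projectiveResolution X).complex)).op

def cxMap' {X X' : ModuleCat.{0} R} (φ : (projectiveResolution X).complex ⟶ (projectiveResolution X').complex)
    (Y : ModuleCat.{0} R) : Cx X' Y ⟶ Cx X Y :=
  (HomologicalComplex.unopFunctor _ _).map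
    ((((linearYoneda R _).obj Y).rightOp.mapHomologicalComplex _).map φ).op

abbrev θ (i : ℕ) (X Y : ModuleCat.{0} R) :
   ((Ext R (ModuleCat.{0} R) i).obj (op X)).obj Y ≅ (Cx X Y).homology i :=
   (projectiveResolution X).isoExt i Y

lemma homologyUnop_naturality {K L : ChainComplex (ModuleCat.{0} R)ᵒᵖ ℕ} (φ : K ⟶ L) (i : ℕ) :
    HomologicalComplex.homologyMap ((HomologicalComplex.unopFunctor _ _).map φ.op) i ≫
      (HomologicalComplex.homologyUnop K i).hom =
    (HomologicalComplex.homologyUnop L i).hom ≫ (HomologicalComplex.homologyMap φ i).unop := by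
  have := HomologicalComplex.homologyOp_hom_naturality ((HomologicalComplex.unopFunctor _ _).map φ.op) i
  apply Quiver.Hom.op_inj
  exact this.symm

lemma genSq {C : Type*} [Category C] {D D' K K' : Cᵒᵖ} {H H' : C} (e : D ≅ K) (e' : D' ≅ K')
    (hu : H ≅ unop K) (hu' : H' ≅ unop K') (d : D' ⟶ D) (k : K' ⟶ K) (w : H ⟶ H')
    (h : e'.inv ≫ d = k ≫ e.inv) (h2 : w ≫ hu'.hom = hu.hom ≫ k.unop) :
    d.unop ≫ (e'.unop.symm ≪≫ hu'.symm).hom = (e.unop.symm ≪≫ hu.symm).hom ≫ w := by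
  have h3 := congrArg Quiver.Hom.unop h
  simp only [unop_comp] at h3
  simp only [Iso.trans_hom, Iso.symm_hom, Iso.unop_inv, Category.assoc]
  rw [← Category.assoc, h3, Category.assoc, ← Category.assoc, ← Category.assoc, Iso.comp_inv_eq,
    Category.assoc, Category.assoc, h2, Iso.inv_hom_id_assoc]

lemma N1 (i : ℕ) (X : ModuleCat.{0} R) {Y Y' : ModuleCat.{0} R} (f : Y ⟶ Y') :
    ((Ext R (ModuleCat.{0} R) i).obj (op X)).map f ≫ (θ i X Y').hom =
      (θ i X Y).hom ≫ HomologicalComplex.homologyMap (cxMap X f) i := by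
  have h := ProjectiveResolution.leftDerived_app_eq (NatTrans.rightOp ((linearYoneda R _).map f)) (projectiveResolution X) i
  have h2 := homologyUnop_naturality ((NatTrans.mapHomologicalComplex (NatTrans.rightOp ((linearYoneda R _).map f)) _).app
      (projectiveResolution X).complex) i
  refine genSq _ _ _ _ ((NatTrans.leftDerived (NatTrans.rightOp ((linearYoneda R _).map f)) i).app X) _ _ ?_ h2
  rw [h]
  simp

lemma N2 (i : ℕ) {X X' : ModuleCat.{0} R} (f : X ⟶ X') (φ : (projectiveResolution X).complex ⟶ (projectiveResolution X').complex)
    (hφ : φ.f 0 ≫ (projectiveResolution X').π.f 0 = (projectiveResolution X).π.f 0 ≫ f)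
    (Y : ModuleCat.{0} R) :
    ((Ext R (ModuleCat.{0} R) i).map f.op).app Y ≫ (θ i X Y).hom =
      (θ i X' Y).hom ≫ HomologicalComplex.homologyMap (cxMap' φ Y) i := by
  have h := ProjectiveResolution.isoLeftDerivedObj_inv_naturality f _ _ φ hφ ((linearYoneda R _).obj Y).rightOp i
  have h2 := homologyUnop_naturality ((((linearYoneda R _).obj Y).rightOp.mapHomologicalComplex _).map φ) i
  exact genSq _ _ _ _ ((((linearYoneda R _).obj Y).rightOp.leftDerived i).map f) _ _ h h2
end LC
end
end

section
open CategoryTheory Limits Opposite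
noncomputable section
namespace LC
variable {R : Type} [CommRing R]

lemma cxMap_comp (X : ModuleCat.{0} R) {Y Y' Y'' : ModuleCat.{0} R} (f : Y ⟶ Y') (g : Y' ⟶ Y'') :
    cxMap X (f ≫ g) = cxMap X f ≫ cxMap X g := by
  ext i x : 3
  apply ModuleCat.hom_ext
  rfl

lemma cxMap_f (X : ModuleCat.{0} R) {Y Y' : ModuleCat.{0} R} (f : Y ⟶ Y') (i : ℕ)
    (x : (projectiveResolution X).complex.X i ⟶ Y) :
    (((cxMap X f).f i).hom : ((projectiveResolution X).complex.X i ⟶ Y) →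
      ((projectiveResolution X).complex.X i ⟶ Y')) x = x ≫ f := rfl

lemma cx_comm {X X' : ModuleCat.{0} R} (φ : (projectiveResolution X).complex ⟶ (projectiveResolution X').complex)
    {Y Y' : ModuleCat.{0} R} (f : Y ⟶ Y') : cxMap' φ Y ≫ cxMap X f = cxMap X' f ≫ cxMap' φ Y' := by
  ext i x : 3
  exact Category.assoc (φ.f i) (show (projectiveResolution X').complex.X i ⟶ Y from x) f

lemma zz (S : ShortComplex (ModuleCat.{0} R)) {P : ModuleCat.{0} R} (x : P ⟶ S.X₁) : (x ≫ S.f) ≫ S.g = 0 := by simp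

lemma genD {C : Type*} [Category C] {E3 E3' E1 E1' H3 H3' H1 H1' : C} (a3 : E3 ≅ H3) (a3' : E3' ≅ H3')
   (a1 : E1 ≅ H1) (a1' : E1' ≅ H1') (d : H3 ⟶ H1) (d' : H3' ⟶ H1') (e3 : E3 ⟶ E3') (h3 : H3 ⟶ H3')
   (e1 : E1 ⟶ E1') (h1 : H1 ⟶ H1') (c3 : e3 ≫ a3'.hom = a3.hom ≫ h3) (c1 : e1 ≫ a1'.hom = a1.hom ≫ h1)
   (hd : d ≫ h1 = h3 ≫ d') : e3 ≫ a3'.hom ≫ d' ≫ a1'.inv = (a3.hom ≫ d ≫ a1.inv) ≫ e1 := by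
  rw [reassoc_of% c3, ← reassoc_of% hd, ← cancel_mono a1'.hom]
  simp [c1]

def cxSeq (X : ModuleCat.{0} R) (S : ShortComplex (ModuleCat.{0} R)) :
    ShortComplex (CochainComplex (ModuleCat.{0} R) ℕ) :=
  ShortComplex.mk (cxMap X S.f) (cxMap X S.g) (by
    ext i x : 3
    exact zz S (show (projectiveResolution X).complex.X i ⟶ S.X₁ from x))

lemma cxSeq_shortExact (X : ModuleCat.{0} R) {S : ShortComplex (ModuleCat.{0} R)} (hS : S.ShortExact) :
    (cxSeq X S).ShortExact := by
  have := hS.mono_f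
  have := hS.epi_g
  apply HomologicalComplex.shortExact_of_degreewise_shortExact
  intro i
  apply ShortComplex.ShortExact.mk'
  · rw [ShortComplex.ShortExact.moduleCat_exact_iff_function_exact]
    intro x
    constructor
    · intro hx
      exact ⟨hS.exact.lift (k := x) hx, hS.exact.lift_f x hx⟩
    · rintro ⟨y, rfl⟩
      exact zz S (show (projectiveResolution X).complex.X i ⟶ S.X₁ from y)
  · rw [ModuleCat.mono_iff_injective]
    intro x y h
    exact (cancel_mono S.f).1 h
  · rw [ModuleCat.epi_iff_surjective]
    intro x
    exact ⟨Projective.factorThru (P := (projectiveResolution X).complex.X i) x S.g, Projective.factorThru_comp (P := (projectiveResolution X).complex.X i) x S.g⟩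

def δX (X : ModuleCat.{0} R) {S : ShortComplex (ModuleCat.{0} R)} (hS : S.ShortExact) (i : ℕ) :
    ((Ext R (ModuleCat.{0} R) i).obj (op X)).obj S.X₃ ⟶ ((Ext R (ModuleCat.{0} R) (i+1)).obj (op X)).obj S.X₁ :=
  (θ i X S.X₃).hom ≫ (cxSeq_shortExact X hS).δ i (i+1) rfl ≫ (θ (i+1) X S.X₁).inv

lemma δX_nat {X X' : ModuleCat.{0} R} (f : X ⟶ X') {S : ShortComplex (ModuleCat.{0} R)} (hS : S.ShortExact) (i : ℕ) :
    ((Ext R (ModuleCat.{0} R) i).map f.op).app S.X₃ ≫ δX X hS i =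
      δX X' hS i ≫ ((Ext R (ModuleCat.{0} R) (i+1)).map f.op).app S.X₁ := by
  let φ := ProjectiveResolution.lift f (projectiveResolution X) (projectiveResolution X')
  have hφ : φ.f 0 ≫ (projectiveResolution X').π.f 0 = (projectiveResolution X).π.f 0 ≫ f := by
    exact ProjectiveResolution.lift_commutes_zero f _ _
  have h3 := N2 i f φ hφ S.X₃
  have h1 := N2 (i+1) f φ hφ S.X₁
  let Φ : cxSeq X' S ⟶ cxSeq X S :=
    { τ₁ := cxMap' φ S.X₁, τ₂ := cxMap' φ S.X₂, τ₃ := cxMap' φ S.X₃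
      comm₁₂ := cx_comm φ S.f
      comm₂₃ := cx_comm φ S.g }
  have hδ := HomologicalComplex.HomologySequence.δ_naturality Φ (cxSeq_shortExact X' hS) (cxSeq_shortExact X hS) i (i+1) rfl
  exact genD _ _ _ _ _ _ _ _ _ _ h3 h1 hδ
end LC
end
end

section
open CategoryTheory Limits Opposite
noncomputable section
namespace LC
variable {R : Type} [CommRing R]

lemma exact_transport {P Q S P' Q' S' : ModuleCat.{0} R} (a : P ≅ P') (b : Q ≅ Q') (c : S ≅ S')
    (f : P ⟶ Q) (g : Q ⟶ S) (f' : P' ⟶ Q') (g' : Q' ⟶ S') (c1 : f ≫ b.hom = a.hom ≫ f')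
    (c2 : g ≫ c.hom = b.hom ≫ g') (h : Function.Exact f'.hom g'.hom) : Function.Exact f.hom g.hom := by
  apply Function.Exact.of_ladder_linearEquiv_of_exact (e₁ := a.symm.toLinearEquiv) (e₂ := b.symm.toLinearEquiv)
    (e₃ := c.symm.toLinearEquiv) _ _ h
  · have : a.inv ≫ f = f' ≫ b.inv := by rw [Iso.inv_comp_eq, ← Category.assoc, ← c1]; simp
    exact congrArg ModuleCat.Hom.hom this
  · have : b.inv ≫ g = g' ≫ c.inv := by rw [Iso.inv_comp_eq, ← Category.assoc, ← c2]; simp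
    exact congrArg ModuleCat.Hom.hom this

lemma genB {C : Type*} [Category C] {P Q S T : C} (a : P ⟶ Q) (d : Q ⟶ S) (b : T ≅ S) :
    (a ≫ d ≫ b.inv) ≫ b.hom = a ≫ d := by simp

abbrev ExtF (i : ℕ) (X : ModuleCat.{0} R) : ModuleCat.{0} R ⥤ ModuleCat.{0} R :=
  (Ext R (ModuleCat.{0} R) i).obj (op X)

lemma ex2 (i : ℕ) (X : ModuleCat.{0} R) {S : ShortComplex (ModuleCat.{0} R)} (hS : S.ShortExact) :
    Function.Exact ((ExtF i X).map S.f).hom ((ExtF i X).map S.g).hom := by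
  refine exact_transport _ _ _ _ _ _ _ (N1 i X S.f) (N1 i X S.g) ?_
  exact (ShortComplex.ShortExact.moduleCat_exact_iff_function_exact _).1
    ((cxSeq_shortExact X hS).homology_exact₂ i)

lemma ex3 (i : ℕ) (X : ModuleCat.{0} R) {S : ShortComplex (ModuleCat.{0} R)} (hS : S.ShortExact) :
    Function.Exact ((ExtF i X).map S.g).hom (δX X hS i).hom := by
  refine exact_transport (θ i X _) (θ i X _) (θ (i+1) X _) _ _ _ ((cxSeq_shortExact X hS).δ i (i+1) rfl) (N1 i X S.g) (genB _ _ _) ?_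
  exact (ShortComplex.ShortExact.moduleCat_exact_iff_function_exact _).1
    ((cxSeq_shortExact X hS).homology_exact₃ i (i+1) rfl)

lemma ex1 (i : ℕ) (X : ModuleCat.{0} R) {S : ShortComplex (ModuleCat.{0} R)} (hS : S.ShortExact) :
    Function.Exact (δX X hS i).hom ((ExtF (i+1) X).map S.f).hom := by
  refine exact_transport (θ i X _) (θ (i+1) X _) (θ (i+1) X _) _ _ ((cxSeq_shortExact X hS).δ i (i+1) rfl) _ (genB _ _ _) (N1 (i+1) X S.f) ?_
  exact (ShortComplex.ShortExact.moduleCat_exact_iff_function_exact _).1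
    ((cxSeq_shortExact X hS).homology_exact₁ i (i+1) rfl)

lemma hm_smul {K L : CochainComplex (ModuleCat.{0} R) ℕ} (r : R) (f : K ⟶ L) (i : ℕ) :
    HomologicalComplex.homologyMap (r • f) i = r • HomologicalComplex.homologyMap f i := by
  rw [← cancel_epi (HomologicalComplex.homologyπ K i), HomologicalComplex.homologyπ_naturality, Linear.comp_smul,
    HomologicalComplex.homologyπ_naturality, ← Linear.smul_comp]
  congr 1
  rw [← cancel_mono (HomologicalComplex.iCycles L i)]
  simp [Linear.smul_comp]

lemma ext_add (i : ℕ) (X : ModuleCat.{0} R) {Y Y' : ModuleCat.{0} R} (f g : Y ⟶ Y') :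
    (ExtF i X).map (f + g) = (ExtF i X).map f + (ExtF i X).map g := by
  rw [← cancel_mono (θ i X Y').hom, Preadditive.add_comp, N1, N1, N1, ← Preadditive.comp_add,
    ← HomologicalComplex.homologyMap_add]
  congr 1

lemma ext_smul (i : ℕ) (X : ModuleCat.{0} R) {Y Y' : ModuleCat.{0} R} (r : R) (f : Y ⟶ Y') :
    (ExtF i X).map (r • f) = r • (ExtF i X).map f := by
  rw [← cancel_mono (θ i X Y').hom, Linear.smul_comp, N1, N1, ← Linear.comp_smul,
    ← hm_smul]
  congr 1

lemma genR {P Q : ModuleCat.{0} R} (r : R) (f : P ⟶ Q) : (r • 𝟙 P) ≫ f = f ≫ (r • 𝟙 Q) := by simp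
lemma genZ {P Q : ModuleCat.{0} R} (f : P ⟶ Q) : (0 : P ⟶ P) ≫ f = f ≫ (0 : Q ⟶ Q) := by simp

lemma ext_nil (i : ℕ) (X Y : ModuleCat.{0} R) (r : R) (hr : r • 𝟙 X = 0) : r • 𝟙 ((ExtF i X).obj Y) = 0 := by
  have h1 := N2 i (r • 𝟙 X) (r • 𝟙 (projectiveResolution X).complex) (genR _ _) Y
  have h2 := N2 i (0 : X ⟶ X) (0 : (projectiveResolution X).complex ⟶ _) (genZ _) Y
  rw [hr, h2] at h1
  have c1 : cxMap' (r • 𝟙 (projectiveResolution X).complex) Y = r • 𝟙 _ := by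
    ext i x : 3
    exact (Linear.smul_comp _ _ _ r (𝟙 _) (show (projectiveResolution X).complex.X i ⟶ Y from x)).trans
      (congrArg (r • ·) (Category.id_comp (show (projectiveResolution X).complex.X i ⟶ Y from x)))
  have c2 : cxMap' (0 : (projectiveResolution X).complex ⟶ (projectiveResolution X).complex) Y = 0 := by
    ext i x : 3
    exact zero_comp (f := (show (projectiveResolution X).complex.X i ⟶ Y from x))
  rw [c1, c2, hm_smul] at h1
  rw [← cancel_mono (θ i X Y).hom]
  simp at h1
  simp [← h1]

lemma ext_inj (i : ℕ) (X Y : ModuleCat.{0} R) [Injective Y] : IsZero ((ExtF (i+1) X).obj Y) := by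
  refine IsZero.of_iso ?_ (θ (i+1) X Y)
  rw [← HomologicalComplex.exactAt_iff_isZero_homology, HomologicalComplex.exactAt_iff' _ i (i+1) (i+2) (by simp) (by simp),
    ShortComplex.ShortExact.moduleCat_exact_iff_function_exact]
  intro x
  constructor
  · intro hx
    have he := (projectiveResolution X).exact_succ i
    exact ⟨he.descToInjective (show (projectiveResolution X).complex.X (i+1) ⟶ Y from x) hx,
      he.comp_descToInjective _ hx⟩
  · rintro ⟨y, rfl⟩
    have := (Cx X Y).d_comp_d i (i+1) (i+2)
    exact congrArg (fun t => t.hom y) this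

def kk (X Y : ModuleCat.{0} R) : ModuleCat.of R (X ⟶ Y) ⟶ (Cx X Y).X 0 :=
  ModuleCat.ofHom (Linear.leftComp R Y ((projectiveResolution X).π.f 0))

lemma kk_d (X Y : ModuleCat.{0} R) : kk X Y ≫ (Cx X Y).d 0 1 = 0 := by
  ext x : 2
  have := congrArg (fun t => t ≫ x) (projectiveResolution X).complex_d_comp_π_f_zero
  exact (Category.assoc _ _ x).symm.trans (this.trans zero_comp)

lemma kk_inj (X Y : ModuleCat.{0} R) : Function.Injective (kk X Y).hom := by
  intro x y h
  exact (cancel_epi ((projectiveResolution X).π.f 0)).1 h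

lemma kk_exact (X Y : ModuleCat.{0} R) : Function.Exact (kk X Y).hom ((Cx X Y).d 0 1).hom := by
  intro x
  constructor
  · intro hx
    have he := (projectiveResolution X).exact₀
    have : Epi (ShortComplex.mk _ _ (projectiveResolution X).complex_d_comp_π_f_zero).g := by
      change Epi ((projectiveResolution X).π.f 0); infer_instance
    exact ⟨he.desc (show (projectiveResolution X).complex.X 0 ⟶ Y from x) hx, he.g_desc _ hx⟩
  · rintro ⟨y, rfl⟩
    exact congrArg (fun t => t.hom y) (kk_d X Y)

def ζ (X Y : ModuleCat.{0} R) : ModuleCat.of R (X ⟶ Y) ⟶ (ExtF 0 X).obj Y :=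
  (Cx X Y).liftCycles (kk X Y) 1 (by simp) (kk_d X Y) ≫ (Cx X Y).homologyπ 0 ≫ (θ 0 X Y).inv

instance (X Y : ModuleCat.{0} R) : IsIso (ζ X Y) := by
  have h0 : IsIso ((Cx X Y).homologyπ 0) := (Cx X Y).isIso_homologyπ 0 0 (by simp) (by simp)
  have : IsIso ((Cx X Y).liftCycles (kk X Y) 1 (by simp) (kk_d X Y)) := by
    rw [ConcreteCategory.isIso_iff_bijective]
    have hl := (Cx X Y).liftCycles_i (kk X Y) 1 (by simp) (kk_d X Y)
    constructor
    · intro a b h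
      apply kk_inj X Y
      rw [← hl]
      exact congrArg ((Cx X Y).iCycles 0).hom h
    · intro z
      obtain ⟨y, hy⟩ := (kk_exact X Y (((Cx X Y).iCycles 0).hom z)).1 (congrArg (fun t => t.hom z) ((Cx X Y).iCycles_d 0 1))
      refine ⟨y, ?_⟩
      apply (ModuleCat.mono_iff_injective ((Cx X Y).iCycles 0)).1 inferInstance
      rw [← hl] at hy
      exact hy
  unfold ζ
  infer_instance

lemma genζ {C : Type*} [Category C] {P P' Z Z' H H' E E' : C} (l : P ⟶ Z) (l' : P' ⟶ Z') (h : Z ⟶ H) (h' : Z' ⟶ H')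
   (e : E ≅ H) (e' : E' ≅ H') (p : P ⟶ P') (z : Z ⟶ Z') (k : H ⟶ H') (m : E ⟶ E') (c1 : p ≫ l' = l ≫ z)
   (c2 : h ≫ k = z ≫ h') (c3 : m ≫ e'.hom = e.hom ≫ k) : p ≫ l' ≫ h' ≫ e'.inv = (l ≫ h ≫ e.inv) ≫ m := by
  rw [← cancel_mono e'.hom]
  simp only [Category.assoc, Iso.inv_hom_id, Category.comp_id, c3, Iso.inv_hom_id_assoc, c2]
  rw [reassoc_of% c1]

lemma ζ_nat (X : ModuleCat.{0} R) {Y Y' : ModuleCat.{0} R} (f : Y ⟶ Y') :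
    ModuleCat.ofHom (Linear.rightComp R X f) ≫ ζ X Y' = ζ X Y ≫ (ExtF 0 X).map f := by
  refine genζ _ _ _ _ (θ 0 X Y) (θ 0 X Y') _ (HomologicalComplex.cyclesMap (cxMap X f) 0) _ _ ?_
    (HomologicalComplex.homologyπ_naturality (cxMap X f) 0) (N1 0 X f)
  rw [← cancel_mono (HomologicalComplex.iCycles _ _)]
  simp only [Category.assoc, HomologicalComplex.cyclesMap_i, HomologicalComplex.liftCycles_i,
    HomologicalComplex.liftCycles_i_assoc]
  ext x : 2
  exact (Category.assoc ((projectiveResolution X).π.f 0) x f).symm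

lemma ζ_nat' {X X' : ModuleCat.{0} R} (f : X ⟶ X') (Y : ModuleCat.{0} R) :
    ModuleCat.ofHom (Linear.leftComp R Y f) ≫ ζ X Y = ζ X' Y ≫ ((Ext R (ModuleCat.{0} R) 0).map f.op).app Y := by
  let φ := ProjectiveResolution.lift f (projectiveResolution X) (projectiveResolution X')
  have hφ : φ.f 0 ≫ (projectiveResolution X').π.f 0 = (projectiveResolution X).π.f 0 ≫ f := by
    exact ProjectiveResolution.lift_commutes_zero f _ _
  refine genζ _ _ _ _ (θ 0 X' Y) (θ 0 X Y) _ (HomologicalComplex.cyclesMap (cxMap' φ Y) 0) _ _ ?_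
    (HomologicalComplex.homologyπ_naturality (cxMap' φ Y) 0) (N2 0 f φ hφ Y)
  rw [← cancel_mono (HomologicalComplex.iCycles _ _)]
  simp only [Category.assoc, HomologicalComplex.cyclesMap_i, HomologicalComplex.liftCycles_i,
    HomologicalComplex.liftCycles_i_assoc]
  ext x : 2
  refine (Category.assoc ((projectiveResolution X).π.f 0) f x).symm.trans ?_
  refine (congrArg (· ≫ x) hφ.symm).trans (Category.assoc (φ.f 0) ((projectiveResolution X').π.f 0) x)
end LC
end
end

section
open CategoryTheory Limits Opposite
noncomputable section
namespace LC
variable {R : Type} [CommRing R]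

section colim
variable {J : Type} [SmallCategory J] [IsFiltered J]

lemma ι_colim_map {F G : J ⥤ ModuleCat.{0} R} (α : F ⟶ G) (j : J) (x : F.obj j) :
    (colim.map α).hom ((colimit.ι F j).hom x) = (colimit.ι G j).hom ((α.app j).hom x) := by
  have := congrArg (fun t => t.hom x) (ι_colimMap α j)
  exact this

lemma ι_rep (F : J ⥤ ModuleCat.{0} R) (x : (colim.obj F : ModuleCat.{0} R)) : ∃ j y, (colimit.ι F j).hom y = x :=
  Concrete.colimit_exists_rep F x

lemma ι_zero (F : J ⥤ ModuleCat.{0} R) (j : J) (x : F.obj j) (h : (colimit.ι F j).hom x = 0) :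
    ∃ (k : J) (f : j ⟶ k), (F.map f).hom x = 0 := by
  have h' : (colimit.ι F j).hom x = (colimit.ι F j).hom 0 := by rw [h, map_zero]
  obtain ⟨k, f, g, e⟩ := Concrete.colimit_exists_of_rep_eq F x 0 h'
  refine ⟨k, f, ?_⟩
  exact e.trans (map_zero _)

lemma ι_w (F : J ⥤ ModuleCat.{0} R) {j k : J} (f : j ⟶ k) (x : F.obj j) :
   (colimit.ι F k).hom ((F.map f).hom x) = (colimit.ι F j).hom x :=
  congrArg (fun t => t.hom x) (colimit.w F f)

lemma colim_exact {F G K : J ⥤ ModuleCat.{0} R} (α : F ⟶ G) (β : G ⟶ K)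
    (h : ∀ j, Function.Exact (α.app j).hom (β.app j).hom) :
    Function.Exact (colim.map α).hom (colim.map β).hom := by
  intro x
  constructor
  · intro hx
    obtain ⟨j, y, rfl⟩ := ι_rep G x
    rw [ι_colim_map] at hx
    obtain ⟨k, f, hf⟩ := ι_zero K j _ hx
    have : (β.app k).hom ((G.map f).hom y) = 0 := by
      rw [← hf]
      exact congrArg (fun t => t.hom y) (β.naturality f)
    obtain ⟨z, hz⟩ := (h k _).1 this
    refine ⟨(colimit.ι F k).hom z, ?_⟩
    rw [ι_colim_map, hz, ι_w]
  · rintro ⟨y, rfl⟩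
    obtain ⟨j, z, rfl⟩ := ι_rep F y
    rw [ι_colim_map, ι_colim_map]
    rw [(h j _).2 ⟨z, rfl⟩, map_zero]

lemma colim_inj {F G : J ⥤ ModuleCat.{0} R} (α : F ⟶ G)
    (h : ∀ j, Function.Injective (α.app j).hom) :
    Function.Injective (colim.map α).hom := by
  rw [injective_iff_map_eq_zero]
  intro x hx
  obtain ⟨j, y, rfl⟩ := ι_rep F x
  rw [ι_colim_map] at hx
  obtain ⟨k, f, hf⟩ := ι_zero G j _ hx
  have : (α.app k).hom ((F.map f).hom y) = 0 := by
    rw [← hf]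
    exact congrArg (fun t => t.hom y) (α.naturality f)
  rw [← ι_w F f y, (injective_iff_map_eq_zero _).1 (h k) _ this, map_zero]
end colim

abbrev Dg (I : Ideal R) (i : ℕ) := (localCohomology.diagram (localCohomology.idealPowersDiagram I) i)

def T (I : Ideal R) (i : ℕ) : ModuleCat.{0} R ⥤ ModuleCat.{0} R :=
  (Dg I i).flip ⋙ colim

def TIso (I : Ideal R) (i : ℕ) : localCohomology I i ≅ T I i :=
  colimitIsoFlipCompColim (Dg I i)

abbrev Q (I : Ideal R) (t : (ℕᵒᵖ)ᵒᵖ) : ModuleCat.{0} R :=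
  (localCohomology.ringModIdeals (localCohomology.idealPowersDiagram I)).obj (unop t)

def δD (I : Ideal R) {S : ShortComplex (ModuleCat.{0} R)} (hS : S.ShortExact) (i : ℕ) :
    (Dg I i).flip.obj S.X₃ ⟶ (Dg I (i+1)).flip.obj S.X₁ where
  app t := δX (Q I t) hS i
  naturality s t f := δX_nat ((localCohomology.ringModIdeals (localCohomology.idealPowersDiagram I)).map f.unop) hS i

variable (I : Ideal R) (i : ℕ)

lemma T_ex2 {S : ShortComplex (ModuleCat.{0} R)} (hS : S.ShortExact) :
    Function.Exact ((T I i).map S.f).hom ((T I i).map S.g).hom :=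
  colim_exact _ _ fun t => ex2 i (Q I t) hS

lemma T_ex3 {S : ShortComplex (ModuleCat.{0} R)} (hS : S.ShortExact) :
    Function.Exact ((T I i).map S.g).hom (colim.map (δD I hS i)).hom :=
  colim_exact _ _ fun t => ex3 i (Q I t) hS

lemma T_ex1 {S : ShortComplex (ModuleCat.{0} R)} (hS : S.ShortExact) :
    Function.Exact (colim.map (δD I hS i)).hom ((T I (i+1)).map S.f).hom :=
  colim_exact _ _ fun t => ex1 i (Q I t) hS

def H (N : Type) [AddCommGroup N] [Module R N] : Type := (T I i).obj (ModuleCat.of R N)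

section
variable (N : Type) [AddCommGroup N] [Module R N]
instance : AddCommGroup (H I i N) := inferInstanceAs (AddCommGroup ((T I i).obj (ModuleCat.of R N)))
instance : Module R (H I i N) := inferInstanceAs (Module R ((T I i).obj (ModuleCat.of R N)))
end

variable {N N' N'' : Type} [AddCommGroup N] [Module R N] [AddCommGroup N'] [Module R N']
  [AddCommGroup N''] [Module R N'']

def Hmap (f : N →ₗ[R] N') : H I i N →ₗ[R] H I i N' := ((T I i).map (ModuleCat.ofHom f)).hom

def Hiso : (localCohomology I i).obj (ModuleCat.of R N) ≃ₗ[R] H I i N := ((TIso I i).app (ModuleCat.of R N)).toLinearEquiv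

def hι (t : (ℕᵒᵖ)ᵒᵖ) : ((ExtF i (Q I t)).obj (ModuleCat.of R N)) →ₗ[R] H I i N :=
  (colimit.ι ((Dg I i).flip.obj (ModuleCat.of R N)) t).hom

lemma hι_map (f : N →ₗ[R] N') (t : (ℕᵒᵖ)ᵒᵖ) (x) : Hmap I i f (hι I i t x) =
   hι I i t (((ExtF i (Q I t)).map (ModuleCat.ofHom f)).hom x) :=
  ι_colim_map ((Dg I i).flip.map (ModuleCat.ofHom f)) t x

lemma hι_rep (x : H I i N) : ∃ t y, hι I i t y = x := ι_rep ((Dg I i).flip.obj (ModuleCat.of R N)) x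

lemma Hmap_id : Hmap I i (LinearMap.id : N →ₗ[R] N) = LinearMap.id :=
  congrArg ModuleCat.Hom.hom ((T I i).map_id (ModuleCat.of R N))

lemma Hmap_comp (g : N' →ₗ[R] N'') (f : N →ₗ[R] N') : Hmap I i (g ∘ₗ f) = Hmap I i g ∘ₗ Hmap I i f :=
  congrArg ModuleCat.Hom.hom ((T I i).map_comp (ModuleCat.ofHom f) (ModuleCat.ofHom g))

lemma Hmap_add (f g : N →ₗ[R] N') : Hmap I i (f + g) = Hmap I i f + Hmap I i g := by
  ext x
  obtain ⟨t, y, rfl⟩ := hι_rep I i x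
  rw [LinearMap.add_apply, hι_map, hι_map, hι_map, ← map_add]
  congr 1
  exact congrArg (fun t => t.hom y) (ext_add i (Q I t) (ModuleCat.ofHom f) (ModuleCat.ofHom g))

lemma Hmap_smul (r : R) (f : N →ₗ[R] N') : Hmap I i (r • f) = r • Hmap I i f := by
  ext x
  obtain ⟨t, y, rfl⟩ := hι_rep I i x
  rw [LinearMap.smul_apply, hι_map, hι_map, ← map_smul]
  congr 1
  exact congrArg (fun t => t.hom y) (ext_smul i (Q I t) r (ModuleCat.ofHom f))

lemma Q_smul (t : (ℕᵒᵖ)ᵒᵖ) (r : R) (hr : r ∈ I ^ (unop (unop t))) : r • 𝟙 (Q I t) = 0 := by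
  ext (x : R ⧸ I ^ (unop (unop t)))
  obtain ⟨x, rfl⟩ := Ideal.Quotient.mk_surjective x
  change r • (Ideal.Quotient.mk _ x) = (0 : R ⧸ I ^ (unop (unop t)))
  rw [Algebra.smul_def]
  change Ideal.Quotient.mk _ r * Ideal.Quotient.mk _ x = 0
  rw [← map_mul, Ideal.Quotient.eq_zero_iff_mem]
  exact Ideal.mul_mem_right _ _ hr

lemma H_nil (x : H I i N) : ∃ t : ℕ, ∀ r ∈ I ^ t, r • x = 0 := by
  obtain ⟨t, y, rfl⟩ := hι_rep I i x
  refine ⟨unop (unop t), fun r hr => ?_⟩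
  rw [← map_smul]
  have : r • y = 0 := congrArg (fun t => t.hom y) (ext_nil i (Q I t) (ModuleCat.of R N) r (Q_smul I t r hr))
  rw [this, map_zero]

lemma shortExact_of {f : N →ₗ[R] N'} {g : N' →ₗ[R] N''} (hf : Function.Injective f) (h : Function.Exact f g)
    (hg : Function.Surjective g) : (ShortComplex.mk (ModuleCat.ofHom f) (ModuleCat.ofHom g)
      (by ext x; exact h.apply_apply_eq_zero x)).ShortExact := by
  apply ShortComplex.ShortExact.mk'
  · rw [ShortComplex.ShortExact.moduleCat_exact_iff_function_exact]; exact h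
  · rw [ModuleCat.mono_iff_injective]; exact hf
  · rw [ModuleCat.epi_iff_surjective]; exact hg

theorem H_les {f : N →ₗ[R] N'} {g : N' →ₗ[R] N''} (hf : Function.Injective f) (h : Function.Exact f g)
    (hg : Function.Surjective g) : ∃ δ : H I i N'' →ₗ[R] H I (i+1) N,
      Function.Exact (Hmap I i f) (Hmap I i g) ∧ Function.Exact (Hmap I i g) δ ∧ Function.Exact δ (Hmap I (i+1) f) := by
  have hS := shortExact_of hf h hg
  have h1 := T_ex2 I i hS
  have h2 := T_ex3 I i hS
  have h3 := T_ex1 I i hS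
  exact ⟨(colim.map (δD I hS i)).hom, h1, h2, h3⟩

theorem H_inj (hN : Module.Injective R N) : Subsingleton (H I (i+1) N) := by
  have : Injective (ModuleCat.of R N) := Module.injective_object_of_injective_module R N
  refine ⟨fun a b => ?_⟩
  obtain ⟨t, y, rfl⟩ := hι_rep I (i+1) a
  obtain ⟨t', y', rfl⟩ := hι_rep I (i+1) b
  have := ModuleCat.subsingleton_of_isZero (ext_inj i (Q I t) (ModuleCat.of R N))
  have := ModuleCat.subsingleton_of_isZero (ext_inj i (Q I t') (ModuleCat.of R N))
  rw [Subsingleton.elim y 0, Subsingleton.elim y' 0, map_zero, map_zero]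
end LC
end
end

section
open CategoryTheory Limits Opposite
noncomputable section
namespace LC
variable {R : Type} [CommRing R] (I : Ideal R)

def q1 (t : (ℕᵒᵖ)ᵒᵖ) : Q I t := (Ideal.Quotient.mk (I ^ (unop (unop t))) 1)

def ev (t : (ℕᵒᵖ)ᵒᵖ) (Y : ModuleCat.{0} R) : ModuleCat.of R (Q I t ⟶ Y) ⟶ Y :=
  ModuleCat.ofHom { toFun := fun φ => φ.hom (q1 I t), map_add' := fun _ _ => rfl, map_smul' := fun _ _ => rfl }

lemma ev_inj (t : (ℕᵒᵖ)ᵒᵖ) (Y : ModuleCat.{0} R) : Function.Injective (ev I t Y).hom := by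
  intro φ ψ h
  ext (x : R ⧸ I ^ (unop (unop t)))
  obtain ⟨x, rfl⟩ := Ideal.Quotient.mk_surjective x
  have e : (Ideal.Quotient.mk (I ^ (unop (unop t))) x : Q I t) = x • q1 I t := by
    change _ = Submodule.Quotient.mk (x • (1 : R))
    rw [smul_eq_mul, mul_one]; rfl
  change φ.hom (q1 I t) = ψ.hom (q1 I t) at h
  change φ.hom (Ideal.Quotient.mk (I ^ (unop (unop t))) x : Q I t) = ψ.hom (Ideal.Quotient.mk (I ^ (unop (unop t))) x : Q I t)
  rw [e, map_smul, map_smul, h]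

def εt (t : (ℕᵒᵖ)ᵒᵖ) (Y : ModuleCat.{0} R) : (ExtF 0 (Q I t)).obj Y ⟶ Y := inv (ζ (Q I t) Y) ≫ ev I t Y

lemma εt_inj (t : (ℕᵒᵖ)ᵒᵖ) (Y : ModuleCat.{0} R) : Function.Injective (εt I t Y).hom := by
  have h1 : Function.Injective (inv (ζ (Q I t) Y)).hom := (ModuleCat.mono_iff_injective _).1 inferInstance
  exact (ev_inj I t Y).comp h1

lemma εt_nat (t : (ℕᵒᵖ)ᵒᵖ) {Y Y' : ModuleCat.{0} R} (f : Y ⟶ Y') : (ExtF 0 (Q I t)).map f ≫ εt I t Y' = εt I t Y ≫ f := by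
  have := ζ_nat (Q I t) f
  unfold εt
  rw [← cancel_epi (ζ (Q I t) Y), ← Category.assoc, ← this]
  simp only [Category.assoc, IsIso.hom_inv_id_assoc]
  rfl

lemma genW {C : Type*} [Category C] {P P' E E' Y : C} (z : P ⟶ E) (z' : P' ⟶ E') [IsIso z] [IsIso z']
    (p : P ⟶ P') (m : E ⟶ E') (e : P ⟶ Y) (e' : P' ⟶ Y) (h : p ≫ z' = z ≫ m) (h' : p ≫ e' = e) :
    m ≫ inv z' ≫ e' = inv z ≫ e := by
  rw [← cancel_epi z, ← Category.assoc, ← h]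
  simp [h']

lemma εt_w {t t' : (ℕᵒᵖ)ᵒᵖ} (f : t ⟶ t') (Y : ModuleCat.{0} R) :
    ((Dg I 0).map f).app Y ≫ εt I t' Y = εt I t Y := by
  have := ζ_nat' ((localCohomology.ringModIdeals (localCohomology.idealPowersDiagram I)).map f.unop) Y
  exact genW (ζ (Q I t) Y) (ζ (Q I t') Y) _ _ (ev I t Y) (ev I t' Y) this rfl

variable {N N' : Type} [AddCommGroup N] [Module R N] [AddCommGroup N'] [Module R N']

def hε : H I 0 N →ₗ[R] N :=
  (colimit.desc ((Dg I 0).flip.obj (ModuleCat.of R N)) ⟨ModuleCat.of R N,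
    { app := fun t => εt I t (ModuleCat.of R N)
      naturality := fun t t' f => (εt_w I f (ModuleCat.of R N)).trans (Category.comp_id _).symm }⟩).hom

lemma hε_ι (t : (ℕᵒᵖ)ᵒᵖ) (x : (ExtF 0 (Q I t)).obj (ModuleCat.of R N)) : hε I (hι I 0 t x) = (εt I t (ModuleCat.of R N)).hom x :=
  congrArg (fun t => t.hom x) (colimit.ι_desc (F := (Dg I 0).flip.obj (ModuleCat.of R N)) ⟨ModuleCat.of R N,
    { app := fun t => εt I t (ModuleCat.of R N)
      naturality := fun t t' f => (εt_w I f (ModuleCat.of R N)).trans (Category.comp_id _).symm }⟩ t)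

lemma hε_inj : Function.Injective (hε I (N := N)) := by
  rw [injective_iff_map_eq_zero]
  intro x hx
  obtain ⟨t, y, rfl⟩ := hι_rep I 0 x
  rw [hε_ι] at hx
  rw [(injective_iff_map_eq_zero _).1 (εt_inj I t _) _ hx, map_zero]

lemma hε_nat (f : N →ₗ[R] N') (x : H I 0 N) : hε I (Hmap I 0 f x) = f (hε I x) := by
  obtain ⟨t, y, rfl⟩ := hι_rep I 0 x
  rw [hι_map, hε_ι, hε_ι]
  exact congrArg (fun t => t.hom y) (εt_nat I t (ModuleCat.ofHom f))

lemma hε_range (y : N) (k : ℕ) (hy : ∀ r ∈ I ^ k, r • y = 0) : ∃ x, hε I x = y := by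
  let t : (ℕᵒᵖ)ᵒᵖ := op (op k)
  let φ : Q I t ⟶ ModuleCat.of R N := ModuleCat.ofHom (Submodule.liftQ (I ^ k) (LinearMap.toSpanSingleton R N y) (by
    intro r hr
    simpa using hy r hr))
  refine ⟨hι I 0 t ((ζ (Q I t) (ModuleCat.of R N)).hom φ), ?_⟩
  rw [hε_ι]
  have : ζ (Q I t) (ModuleCat.of R N) ≫ εt I t (ModuleCat.of R N) = ev I t _ := by simp [εt]
  refine (congrArg (fun t => t.hom φ) this).trans ?_
  change (LinearMap.toSpanSingleton R N y) 1 = y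
  simp

lemma H0_inj (f : N →ₗ[R] N') (hf : Function.Injective f) : Function.Injective (Hmap I 0 f) := by
  intro x y h
  apply hε_inj
  apply hf
  rw [← hε_nat, ← hε_nat, h]
end LC
end
end

section
noncomputable section
namespace LC
open CategoryTheory
attribute [local irreducible] H Hmap hε T
variable {R : Type} [CommRing R] (I : Ideal R)
variable {N N' N'' : Type} [AddCommGroup N] [Module R N] [AddCommGroup N'] [Module R N']
  [AddCommGroup N''] [Module R N'']

lemma mid_zero {f : N →ₗ[R] N'} {g : N' →ₗ[R] N''} (hf : Function.Injective f) (h : Function.Exact f g)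
    (hg : Function.Surjective g) (i : ℕ) (h1 : Subsingleton (H I i N)) (h3 : Subsingleton (H I i N'')) :
    Subsingleton (H I i N') := by
  obtain ⟨δ, e2, e3, e1⟩ := H_les I i hf h hg
  refine subsingleton_of_forall_eq 0 fun x => ?_
  obtain ⟨y, rfl⟩ := (e2 x).1 (Subsingleton.elim _ _)
  rw [Subsingleton.elim y 0, map_zero]

lemma left_zero {f : N →ₗ[R] N'} {g : N' →ₗ[R] N''} (hf : Function.Injective f) (h : Function.Exact f g)
    (hg : Function.Surjective g) (i : ℕ) (h3 : Subsingleton (H I i N'')) (h2 : Subsingleton (H I (i+1) N')) :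
    Subsingleton (H I (i+1) N) := by
  obtain ⟨δ, e2, e3, e1⟩ := H_les I i hf h hg
  refine subsingleton_of_forall_eq 0 fun x => ?_
  obtain ⟨y, rfl⟩ := (e1 x).1 (Subsingleton.elim _ _)
  rw [Subsingleton.elim y 0, map_zero]

def ITor (N : Type) [AddCommGroup N] [Module R N] : Prop := ∀ y : N, ∃ k : ℕ, ∀ r ∈ I ^ k, r • y = 0

def Gam (N : Type) [AddCommGroup N] [Module R N] : Submodule R N where
  carrier := {y | ∃ k : ℕ, ∀ r ∈ I ^ k, r • y = 0}
  zero_mem' := ⟨0, by simp⟩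
  add_mem' := by
    rintro a b ⟨k, hk⟩ ⟨l, hl⟩
    refine ⟨max k l, fun r hr => ?_⟩
    rw [smul_add, hk r (Ideal.pow_le_pow_right (le_max_left _ _) hr), hl r (Ideal.pow_le_pow_right (le_max_right _ _) hr), add_zero]
  smul_mem' := by
    rintro c a ⟨k, hk⟩
    exact ⟨k, fun r hr => by rw [smul_comm, hk r hr, smul_zero]⟩

lemma Gam_tor : ITor I (Gam I N) := by
  rintro ⟨y, k, hk⟩
  exact ⟨k, fun r hr => Subtype.ext (hk r hr)⟩

lemma Gam_inj [IsNoetherianRing R] (hN : Module.Injective R N) : Module.Injective R (Gam I N) := by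
  apply Module.Baer.injective
  intro 𝔞 g
  -- bound
  obtain ⟨k, hk⟩ : ∃ k : ℕ, ∀ r ∈ I ^ k, ∀ a, r • g a = 0 := by
    have hfg : (LinearMap.range g).FG := (IsNoetherian.noetherian (⊤ : Submodule R 𝔞)).map g |> (by rw [LinearMap.range_eq_map]; exact ·)
    obtain ⟨s, hs⟩ := hfg
    choose kk hkk using Gam_tor I (N := N)
    refine ⟨s.sup kk, fun r hr a => ?_⟩
    have : g a ∈ Submodule.span R (s : Set (Gam I N)) := hs ▸ ⟨a, rfl⟩
    generalize g a = b at this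
    induction this using Submodule.span_induction with
    | mem x h => exact hkk x r (Ideal.pow_le_pow_right (Finset.le_sup h) hr)
    | zero => simp
    | add x y _ _ hx hy => rw [smul_add, hx, hy, add_zero]
    | smul c x _ hx => rw [smul_comm, hx, smul_zero]
  obtain ⟨c, hc⟩ := Ideal.exists_pow_inf_eq_pow_smul I (M := R) 𝔞
  have hg0 : ∀ a (ha : a ∈ 𝔞), a ∈ I ^ (k + c) → g ⟨a, ha⟩ = 0 := by
    intro a ha haI
    have h1 : a ∈ I ^ (k+c) • (⊤ : Submodule R R) ⊓ 𝔞 := ⟨by simpa using haI, ha⟩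
    rw [hc (k+c) (by omega), Nat.add_sub_cancel] at h1
    have h2 : a ∈ I ^ k • 𝔞 := (Submodule.smul_mono le_rfl inf_le_right) h1
    have h3 : ∀ b ∈ I ^ k • 𝔞, ∀ hb : b ∈ 𝔞, g ⟨b, hb⟩ = 0 := by
      intro b hb
      induction hb using Submodule.smul_induction_on' with
      | smul r hr x hx =>
        intro hb
        have := hk r hr ⟨x, hx⟩
        rw [← map_smul] at this
        exact this
      | add x hx y hy h1 h2 =>
        intro hb
        have hx' := Submodule.smul_le_right hx
        have hy' := Submodule.smul_le_right hy
        have : (⟨x + y, hb⟩ : 𝔞) = ⟨x, hx'⟩ + ⟨y, hy'⟩ := rfl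
        rw [this, map_add, h1, h2, add_zero]
    exact h3 a h2 ha
  let P : Submodule R 𝔞 := Submodule.comap 𝔞.subtype (I ^ (k+c))
  let j : (𝔞 ⧸ P) →ₗ[R] (R ⧸ I ^ (k+c)) := Submodule.mapQ P (I ^ (k+c)) 𝔞.subtype le_rfl
  have hj : Function.Injective j := by
    rw [← LinearMap.ker_eq_bot]
    exact Submodule.ker_liftQ_eq_bot _ _ _ (by rw [LinearMap.ker_comp, Submodule.ker_mkQ])
  let g1 : (𝔞 ⧸ P) →ₗ[R] N := Submodule.liftQ P ((Gam I N).subtype ∘ₗ g) (by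
    intro a ha
    have := hg0 a.1 a.2 ha
    simp [this])
  obtain ⟨h, hh⟩ := hN.out j hj g1
  refine ⟨LinearMap.codRestrict (Gam I N) (h ∘ₗ Submodule.mkQ _) ?_, ?_⟩
  · intro x
    refine ⟨k + c, fun r hr => ?_⟩
    rw [← map_smul, LinearMap.comp_apply]
    have : (Submodule.mkQ (I ^ (k+c))) (r • x) = 0 := by
      rw [Submodule.mkQ_apply, Submodule.Quotient.mk_eq_zero]
      exact Ideal.mul_mem_right _ _ hr
    rw [this, map_zero]
  · intro x hx
    apply Subtype.ext
    exact hh (Submodule.Quotient.mk ⟨x, hx⟩)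

lemma Hequiv_symm (i : ℕ) (m : N ≃ₗ[R] N') (y : H I i N) : Hmap I i (m.symm : N' →ₗ[R] N) (Hmap I i (m : N →ₗ[R] N') y) = y := by
  rw [← LinearMap.comp_apply, ← Hmap_comp]
  have : (m.symm : N' →ₗ[R] N) ∘ₗ (m : N →ₗ[R] N') = LinearMap.id := by ext; simp
  rw [this, Hmap_id, LinearMap.id_apply]

lemma ITor.of_inj {f : N →ₗ[R] N'} (hf : Function.Injective f) (h : ITor I N') : ITor I N := by
  intro y
  obtain ⟨k, hk⟩ := h (f y)
  exact ⟨k, fun r hr => hf (by rw [map_smul, hk r hr, map_zero])⟩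

lemma ITor.of_surj {f : N →ₗ[R] N'} (hf : Function.Surjective f) (h : ITor I N) : ITor I N' := by
  intro y
  obtain ⟨y, rfl⟩ := hf y
  obtain ⟨k, hk⟩ := h y
  exact ⟨k, fun r hr => by rw [← map_smul, hk r hr, map_zero]⟩

lemma hε_surj (h : ITor I N) : Function.Surjective (hε I (N := N)) := fun y => by
  obtain ⟨k, hk⟩ := h y
  exact hε_range I y k hk

lemma inj_under (N : Type) [AddCommGroup N] [Module R N] : Module.Injective R (↑(Injective.under (ModuleCat.of R N) : ModuleCat.{0} R) : Type) := by
  have : Injective (ModuleCat.of R (↑(Injective.under (ModuleCat.of R N) : ModuleCat.{0} R) : Type)) :=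
    inferInstanceAs (Injective (Injective.under (ModuleCat.of R N)))
  exact Module.injective_module_of_injective_object R _

theorem H_tor [IsNoetherianRing R] (i : ℕ) : ∀ (N : Type) [AddCommGroup N] [Module R N], ITor I N → Subsingleton (H I (i+1) N) := by
  induction i with
  | zero =>
    intro N _ _ hN
    let J : ModuleCat.{0} R := Injective.under (ModuleCat.of R N)
    have hJ : Module.Injective R J := inj_under (R := R) N
    let j : N →ₗ[R] J := (Injective.ι (ModuleCat.of R N)).hom
    have hj : Function.Injective j := (ModuleCat.mono_iff_injective (Injective.ι (ModuleCat.of R N))).1 inferInstance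
    have hmem : ∀ x, j x ∈ Gam I J := fun x => by
      obtain ⟨k, hk⟩ := hN x
      exact ⟨k, fun r hr => by rw [← map_smul, hk r hr, map_zero]⟩
    let f : N →ₗ[R] Gam I J := j.codRestrict _ hmem
    have hf : Function.Injective f := fun a b h => hj (congrArg Subtype.val h)
    obtain ⟨δ, e2, e3, e1⟩ := H_les I 0 hf (g := (LinearMap.range f).mkQ) (LinearMap.exact_map_mkQ_range f) (Submodule.mkQ_surjective _)
    have := H_inj I 0 (Gam_inj I hJ)
    refine subsingleton_of_forall_eq 0 fun x => ?_
    obtain ⟨y, rfl⟩ := (e1 x).1 (Subsingleton.elim _ _)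
    apply (e3 y).2
    obtain ⟨z, hz⟩ := Submodule.mkQ_surjective _ (hε I y)
    obtain ⟨w, rfl⟩ := hε_surj I (Gam_tor I) z
    refine ⟨w, ?_⟩
    apply hε_inj
    rw [hε_nat, hz]
  | succ i ih =>
    intro N _ _ hN
    let J : ModuleCat.{0} R := Injective.under (ModuleCat.of R N)
    have hJ : Module.Injective R J := inj_under (R := R) N
    let j : N →ₗ[R] J := (Injective.ι (ModuleCat.of R N)).hom
    have hj : Function.Injective j := (ModuleCat.mono_iff_injective (Injective.ι (ModuleCat.of R N))).1 inferInstance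
    have hmem : ∀ x, j x ∈ Gam I J := fun x => by
      obtain ⟨k, hk⟩ := hN x
      exact ⟨k, fun r hr => by rw [← map_smul, hk r hr, map_zero]⟩
    let f : N →ₗ[R] Gam I J := j.codRestrict _ hmem
    have hf : Function.Injective f := fun a b h => hj (congrArg Subtype.val h)
    exact left_zero I hf (g := (LinearMap.range f).mkQ) (LinearMap.exact_map_mkQ_range f) (Submodule.mkQ_surjective _) (i+1)
      (ih _ (ITor.of_surj I (Submodule.mkQ_surjective _) (Gam_tor I))) (H_inj I (i+1) (Gam_inj I hJ))

theorem H_bij {x : R} (hx : x ∈ I) (hb : Function.Bijective (fun y : N => x • y)) (i : ℕ) : Subsingleton (H I i N) := by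
  let m : N ≃ₗ[R] N := LinearEquiv.ofBijective (x • LinearMap.id) hb
  have hinj : ∀ y : H I i N, x • y = 0 → y = 0 := by
    intro y hy
    have h1 : Hmap I i (m : N →ₗ[R] N) = x • LinearMap.id := by
      change Hmap I i (x • (LinearMap.id : N →ₗ[R] N)) = _
      rw [Hmap_smul, Hmap_id]
    have h2 := Hequiv_symm I i m y
    rw [h1, LinearMap.smul_apply, LinearMap.id_apply, hy, map_zero] at h2
    exact h2.symm
  refine subsingleton_of_forall_eq 0 fun y => ?_
  obtain ⟨t, ht⟩ := H_nil I i y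
  have : x ^ t • y = 0 := ht _ (Ideal.pow_mem_pow hx t)
  clear ht
  induction t with
  | zero => rwa [pow_zero, one_smul] at this
  | succ t ih =>
    apply ih
    apply hinj
    rw [smul_smul, ← pow_succ', this]

theorem H0_zero {x : R} (hx : x ∈ I) (hb : Function.Injective (fun y : N => x • y)) : Subsingleton (H I 0 N) := by
  refine subsingleton_of_forall_eq 0 fun y => ?_
  obtain ⟨t, ht⟩ := H_nil I 0 y
  have : x ^ t • hε I y = 0 := by rw [← map_smul, ht _ (Ideal.pow_mem_pow hx t), map_zero]
  clear ht
  induction t with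
  | zero => apply hε_inj; rw [pow_zero, one_smul] at this; rw [this, map_zero]
  | succ t ih =>
    apply ih
    apply hb
    change x • x ^ t • _ = x • 0
    rw [smul_smul, ← pow_succ', this, smul_zero]

theorem H_dim [IsNoetherianRing R] {n : ℕ} (X : Fin n → R) (j : ℕ) (hj : j ≤ n) :
    ∀ (N : Type) [AddCommGroup N] [Module R N], (∀ i : Fin n, j ≤ i → ∀ y : N, ∃ k : ℕ, X i ^ k • y = 0) →
    ∀ i, j < i → Subsingleton (H (Ideal.span (Set.range X)) i N) := by
  induction j with
  | zero =>
    intro N _ _ hN i hi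
    obtain ⟨i, rfl⟩ : ∃ k, i = k + 1 := ⟨i - 1, by omega⟩
    apply H_tor
    intro y
    have h1 : Ideal.span (Set.range X) ≤ Ideal.radical (LinearMap.ker (LinearMap.toSpanSingleton R N y)) := by
      rw [Ideal.span_le]
      rintro _ ⟨i, rfl⟩
      obtain ⟨k, hk⟩ := hN i (Nat.zero_le _) y
      exact ⟨k, by simpa using hk⟩
    obtain ⟨k, hk⟩ := Ideal.exists_pow_le_of_le_radical_of_fg h1 (IsNoetherian.noetherian _)
    exact ⟨k, fun r hr => by simpa using hk hr⟩
  | succ j ih =>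
    intro N _ _ hN i hi
    have ih := ih (by omega)
    let x := X ⟨j, by omega⟩
    have hx : x ∈ Ideal.span (Set.range X) := Ideal.subset_span ⟨_, rfl⟩
    let L := LocalizedModule (Submonoid.powers x) N
    let f : N →ₗ[R] L := LocalizedModule.mkLinearMap (Submonoid.powers x) N
    have hL : ∀ i, Subsingleton (H (Ideal.span (Set.range X)) i L) := by
      intro i
      apply H_bij _ hx
      exact (Module.End.isUnit_iff _).1 (IsLocalizedModule.map_units f ⟨x, Submonoid.mem_powers x⟩)
    have hs : ∀ l : L, ∃ (k : ℕ) (y : N), x ^ k • l = f y := by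
      intro l
      obtain ⟨⟨y, ⟨_, k, rfl⟩⟩, hy⟩ := IsLocalizedModule.surj (Submonoid.powers x) f l
      exact ⟨k, y, hy⟩
    -- kernel
    have hK : ∀ i, j < i → Subsingleton (H (Ideal.span (Set.range X)) i (LinearMap.ker f)) := by
      intro i hi
      refine ih _ ?_ i hi
      rintro i hi ⟨y, hy⟩
      rcases Nat.eq_or_lt_of_le hi with h | h
      · obtain ⟨⟨_, k, rfl⟩, hk⟩ := (IsLocalizedModule.eq_zero_iff (Submonoid.powers x) f).1 hy
        refine ⟨k, Subtype.ext ?_⟩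
        have : i = ⟨j, by omega⟩ := Fin.ext h.symm
        rw [this]
        exact hk
      · obtain ⟨k, hk⟩ := hN i h y
        exact ⟨k, Subtype.ext hk⟩
    have hQ : ∀ i, j < i → Subsingleton (H (Ideal.span (Set.range X)) i (L ⧸ LinearMap.range f)) := by
      intro i hi
      refine ih _ ?_ i hi
      intro i hi l
      obtain ⟨l, rfl⟩ := Submodule.mkQ_surjective _ l
      obtain ⟨k, y, hy⟩ := hs l
      rcases Nat.eq_or_lt_of_le hi with h | h
      · refine ⟨k, ?_⟩
        have : i = ⟨j, by omega⟩ := Fin.ext h.symm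
        rw [this, ← map_smul]
        change (LinearMap.range f).mkQ (x ^ k • l) = 0
        rw [hy]
        simp
      · obtain ⟨k', hk'⟩ := hN i h y
        refine ⟨k', ?_⟩
        rw [← map_smul]
        have : x ^ k • (X i ^ k' • l) = x ^ k • 0 := by
          rw [smul_comm, hy, ← map_smul, hk', smul_zero, map_zero]
        have hinj : Function.Injective (fun l : L => x ^ k • l) :=
          ((Module.End.isUnit_iff _).1 (IsLocalizedModule.map_units f (⟨x ^ k, ⟨k, rfl⟩⟩ : Submonoid.powers x))).1
        rw [hinj this, map_zero]
    have hC : Subsingleton (H (Ideal.span (Set.range X)) i (LinearMap.range f)) := by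
      obtain ⟨i, rfl⟩ : ∃ k, i = k + 1 := ⟨i - 1, by omega⟩
      refine left_zero _ (f := (LinearMap.range f).subtype) (g := (LinearMap.range f).mkQ) (Submodule.subtype_injective _) ?_ (Submodule.mkQ_surjective _) i (hQ i (by omega)) (hL _)
      exact LinearMap.exact_subtype_mkQ _
    refine mid_zero _ (f := (LinearMap.ker f).subtype) (g := f.rangeRestrict) (Submodule.subtype_injective _) ?_ f.surjective_rangeRestrict i (hK i (by omega)) hC
    rw [LinearMap.exact_iff]
    simp
end LC
end
end

section
noncomputable section
namespace LC
variable (A : Type) [CommRing A] (n : ℕ)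

def LL : Type := HahnSeries (Fin n → ℤ) A
instance : CommRing (LL A n) := inferInstanceAs (CommRing (HahnSeries (Fin n → ℤ) A))

variable {A n}
def co (l : LL A n) (u : Fin n → ℤ) : A := HahnSeries.coeff (Γ := Fin n → ℤ) l u

lemma co_ext {l m : LL A n} (h : ∀ u, co l u = co m u) : l = m :=
  HahnSeries.ext (funext h)

lemma co_add (l m : LL A n) (u) : co (l + m) u = co l u + co m u := HahnSeries.coeff_add
lemma co_sub (l m : LL A n) (u) : co (l - m) u = co l u - co m u := HahnSeries.coeff_sub
lemma co_zero (u) : co (0 : LL A n) u = 0 := HahnSeries.coeff_zero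

def io (n : ℕ) : (Fin n →₀ ℕ) →+ (Fin n → ℤ) where
  toFun v i := v i
  map_zero' := by ext; simp
  map_add' _ _ := by ext; simp

lemma io_inj : Function.Injective (io n) := by
  intro a b h
  ext i
  have := congrFun h i
  simpa [io] using this

lemma io_le (g g' : Fin n →₀ ℕ) : io n g ≤ io n g' ↔ g ≤ g' := by
  simp [Pi.le_def, Finsupp.le_def, io]

lemma mem_range_io (u : Fin n → ℤ) (h : 0 ≤ u) : ∃ v, io n v = u := by
  refine ⟨Finsupp.equivFunOnFinite.symm (fun i => (u i).toNat), ?_⟩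
  ext i
  have := h i
  simp [io] at this ⊢
  exact this

def emb : MvPowerSeries (Fin n) A →+* LL A n :=
  (HahnSeries.embDomainRingHom (io n) io_inj io_le).comp
    (HahnSeries.toMvPowerSeries (σ := Fin n) (R := A)).symm.toRingHom

instance : Algebra (MvPowerSeries (Fin n) A) (LL A n) := (emb (A := A) (n := n)).toAlgebra

lemma smul_eq (r : MvPowerSeries (Fin n) A) (l : LL A n) : r • l = emb r * l := rfl

lemma co_emb (r : MvPowerSeries (Fin n) A) (v : Fin n →₀ ℕ) : co (emb r) (io n v) = MvPowerSeries.coeff v r :=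
  HahnSeries.embDomain_coeff (f := ⟨⟨io n, io_inj⟩, io_le _ _⟩)

lemma co_emb_ne (r : MvPowerSeries (Fin n) A) (u : Fin n → ℤ) (h : co (emb r) u ≠ 0) : ∃ v, io n v = u := by
  by_contra hc
  apply h
  exact HahnSeries.embDomain_of_notMem_range (f := ⟨⟨io n, io_inj⟩, io_le _ _⟩) hc

lemma co_smul_ne (r : MvPowerSeries (Fin n) A) (l : LL A n) (u) (h : co (r • l) u ≠ 0) :
   ∃ v, co l (u - io n v) ≠ 0 := by
  have h1 : u ∈ HahnSeries.support (Γ := Fin n → ℤ) (emb r * l) := h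
  obtain ⟨a, ha, b, hb, rfl⟩ := HahnSeries.support_mul_subset h1
  obtain ⟨v, rfl⟩ := co_emb_ne r a ha
  refine ⟨v, ?_⟩
  simp only [add_sub_cancel_left]
  exact hb

lemma co_X (j : Fin n) (l : LL A n) (u) : co ((MvPowerSeries.X j : MvPowerSeries (Fin n) A) • l) u = co l (u - Pi.single j 1) := by
  have h : emb (MvPowerSeries.X j : MvPowerSeries (Fin n) A) = (HahnSeries.single (Pi.single j 1 : Fin n → ℤ) (1 : A) : LL A n) := by
    have e : (HahnSeries.toMvPowerSeries (σ := Fin n) (R := A)).symm (MvPowerSeries.X j) = HahnSeries.single (Finsupp.single j 1) 1 := by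
      ext v
      rw [HahnSeries.coeff_toMvPowerSeries_symm, MvPowerSeries.coeff_X, HahnSeries.coeff_single]
      congr
    change HahnSeries.embDomain ⟨⟨io n, io_inj⟩, io_le _ _⟩ ((HahnSeries.toMvPowerSeries (σ := Fin n) (R := A)).symm (MvPowerSeries.X j)) = _
    rw [e, HahnSeries.embDomain_single]
    congr 2
    ext i
    simp [io, Finsupp.single_apply, Pi.single_apply, eq_comm]
  rw [smul_eq, h]
  exact HahnSeries.coeff_single_mul.trans (one_mul _)

lemma co_C (a : A) (l : LL A n) (u) : co ((MvPowerSeries.C a : MvPowerSeries (Fin n) A) • l) u = a * co l u := by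
  have h : emb (MvPowerSeries.C a : MvPowerSeries (Fin n) A) = (HahnSeries.single (0 : Fin n → ℤ) a : LL A n) := by
    have e : (HahnSeries.toMvPowerSeries (σ := Fin n) (R := A)).symm (MvPowerSeries.C a) = HahnSeries.single 0 a := by
      ext v
      rw [HahnSeries.coeff_toMvPowerSeries_symm, MvPowerSeries.coeff_C, HahnSeries.coeff_single]
      congr
    change HahnSeries.embDomain ⟨⟨io n, io_inj⟩, io_le _ _⟩ ((HahnSeries.toMvPowerSeries (σ := Fin n) (R := A)).symm (MvPowerSeries.C a)) = _
    rw [e, HahnSeries.embDomain_single]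
    congr 2
  rw [smul_eq, h]
  exact HahnSeries.coeff_single_zero_mul

def mask (S : Set (Fin n → ℤ)) (l : LL A n) : LL A n :=
  (⟨S.indicator (co l), (HahnSeries.isPWO_support (Γ := Fin n → ℤ) l).mono (fun u hu => by
    simp only [Function.mem_support, Set.indicator_apply_ne_zero] at hu
    exact hu.2)⟩ : HahnSeries (Fin n → ℤ) A)

lemma co_mask (S : Set (Fin n → ℤ)) (l : LL A n) (u) : co (mask S l) u = S.indicator (co l) u := rfl

def xinv (j : Fin n) (l : LL A n) : LL A n :=
  (HahnSeries.single (-Pi.single j 1 : Fin n → ℤ) (1 : A) * (show HahnSeries (Fin n → ℤ) A from l) : HahnSeries (Fin n → ℤ) A)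

lemma co_xinv (j : Fin n) (l : LL A n) (u) : co (xinv j l) u = co l (u + Pi.single j 1) := by
  refine (HahnSeries.coeff_single_mul.trans (one_mul _)).trans ?_
  rw [sub_neg_eq_add]; rfl

def LS (S : Set (Fin n → ℤ)) (hS : IsUpperSet S) : Submodule (MvPowerSeries (Fin n) A) (LL A n) where
  carrier := {l | ∀ u ∉ S, co l u = 0}
  zero_mem' := fun u _ => co_zero u
  add_mem' := by
    intro a b ha hb u hu
    rw [co_add, ha u hu, hb u hu, add_zero]
  smul_mem' := by
    intro r l hl u hu
    by_contra hc
    obtain ⟨v, hv⟩ := co_smul_ne r l u hc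
    apply hv
    apply hl
    intro hmem
    apply hu
    refine hS ?_ hmem
    intro i
    simp [io]

def Ws (n j : ℕ) : Set (Fin n → ℤ) := {u | ∀ i : Fin n, j ≤ i → 0 ≤ u i}
def Bs (n j : ℕ) : Set (Fin n → ℤ) := {u | ∃ i : Fin n, (i : ℕ) < j ∧ 0 ≤ u i}
lemma Ws_up (n j : ℕ) : IsUpperSet (Ws n j) := fun _ _ h hu i hi => (hu i hi).trans (h i)
lemma Bs_up (n j : ℕ) : IsUpperSet (Bs n j) := fun _ _ h ⟨i, hi, hu⟩ => ⟨i, hi, hu.trans (h i)⟩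

variable (A n) in
abbrev QQ (j k : ℕ) : Type := (LS (A := A) (Ws n j) (Ws_up n j)) ⧸ ((LS (A := A) (Bs n k) (Bs_up n k)).comap (LS (A := A) (Ws n j) (Ws_up n j)).subtype)

def qk (j k : ℕ) : (LS (A := A) (Ws n j) (Ws_up n j)) →ₗ[MvPowerSeries (Fin n) A] QQ A n j k := Submodule.mkQ _

lemma qk_surj (j k : ℕ) : Function.Surjective (qk (A := A) (n := n) j k) := Submodule.mkQ_surjective _

lemma qk_zero (j k : ℕ) (l) : qk (A := A) (n := n) j k l = 0 ↔ ∀ u ∉ Bs n k, co l.1 u = 0 := by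
  unfold qk
  rw [Submodule.mkQ_apply, Submodule.Quotient.mk_eq_zero]
  rfl

lemma Ws_mono {j k : ℕ} (h : j ≤ k) : Ws n j ⊆ Ws n k := fun _ hu i hi => hu i (h.trans hi)
lemma Bs_mono {j k : ℕ} (h : j ≤ k) : Bs n j ⊆ Bs n k := fun _ ⟨i, hi, hu⟩ => ⟨i, by omega, hu⟩

def fE (j : ℕ) : QQ A n j j →ₗ[MvPowerSeries (Fin n) A] QQ A n (j+1) j :=
  Submodule.mapQ _ _ (Submodule.inclusion (fun l hl u hu => hl u (fun h => hu (Ws_mono (Nat.le_succ j) h))))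
    (fun _ hl => hl)

def gE (j : ℕ) : QQ A n (j+1) j →ₗ[MvPowerSeries (Fin n) A] QQ A n (j+1) (j+1) :=
  Submodule.mapQ _ _ LinearMap.id (fun _ hl u hu => hl u (fun h => hu (Bs_mono (Nat.le_succ j) h)))

lemma fE_inj (j : ℕ) : Function.Injective (fE (A := A) (n := n) j) := by
  rw [injective_iff_map_eq_zero]
  intro x hx
  obtain ⟨l, rfl⟩ := qk_surj j j x
  rw [qk_zero]
  exact (qk_zero (j+1) j _).1 hx

lemma gE_surj (j : ℕ) : Function.Surjective (gE (A := A) (n := n) j) := by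
  intro x
  obtain ⟨l, rfl⟩ := qk_surj (j+1) (j+1) x
  exact ⟨qk _ _ l, rfl⟩

lemma fgE_exact (j : ℕ) (hj : j < n) : Function.Exact (fE (A := A) (n := n) j) (gE (A := A) (n := n) j) := by
  intro x
  constructor
  · intro hx
    obtain ⟨l, rfl⟩ := qk_surj (j+1) j x
    have h : ∀ u ∉ Bs n (j+1), co l.1 u = 0 := (qk_zero (j+1) (j+1) _).1 hx
    have hm : mask (Ws n j) l.1 ∈ LS (A := A) (Ws n j) (Ws_up n j) := by
      intro u hu
      rw [co_mask, Set.indicator_of_notMem hu]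
    refine ⟨qk _ _ ⟨_, hm⟩, ?_⟩
    rw [← sub_eq_zero]
    change qk _ _ _ - qk _ _ l = 0
    rw [← map_sub, qk_zero]
    intro u hu
    change co (mask (Ws n j) l.1 - l.1) u = 0
    rw [co_sub, co_mask]
    by_cases hW : u ∈ Ws n j
    · rw [Set.indicator_of_mem hW, sub_self]
    · rw [Set.indicator_of_notMem hW, zero_sub, neg_eq_zero]
      by_contra hc
      have h1 : u ∈ Bs n (j+1) := by by_contra hh; exact hc (h u hh)
      have h2 : u ∈ Ws n (j+1) := by by_contra hh; exact hc (l.2 u hh)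
      obtain ⟨i, hi, hui⟩ := h1
      rcases Nat.lt_succ_iff_lt_or_eq.1 hi with h' | h'
      · exact hu ⟨i, h', hui⟩
      · apply hW
        intro k hk
        rcases Nat.eq_or_lt_of_le hk with h'' | h''
        · have : k = i := Fin.ext (by omega)
          rwa [this]
        · exact h2 k h''
  · rintro ⟨y, rfl⟩
    obtain ⟨l, rfl⟩ := qk_surj j j y
    change qk (j+1) (j+1) _ = 0
    rw [qk_zero]
    intro u hu
    change co l.1 u = 0
    by_contra hc
    have h2 : u ∈ Ws n j := by by_contra hh; exact hc (l.2 u hh)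
    exact hu ⟨⟨j, hj⟩, by simp, h2 _ le_rfl⟩
end LC
end
end

section
noncomputable section
namespace LC
variable {A : Type} [CommRing A] {n : ℕ}

lemma Bs_shift {k : ℕ} (j : Fin n) (hk : k ≤ j) (u : Fin n → ℤ) (hu : u ∉ Bs n k) : u + Pi.single j 1 ∉ Bs n k := by
  rintro ⟨i, hi, h⟩
  apply hu
  refine ⟨i, hi, ?_⟩
  have : i ≠ j := by rintro rfl; omega
  simpa [Pi.single_apply, this] using h

lemma X_inj (m k : ℕ) (j : Fin n) (hk : k ≤ j) :
    Function.Injective (fun y : QQ A n m k => (MvPowerSeries.X j : MvPowerSeries (Fin n) A) • y) := by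
  intro x y hxy
  simp only at hxy
  rw [← sub_eq_zero, ← smul_sub] at hxy
  rw [← sub_eq_zero]
  generalize x - y = z at hxy
  obtain ⟨l, rfl⟩ := qk_surj m k z
  rw [← map_smul, qk_zero] at hxy
  rw [qk_zero]
  intro u hu
  have := hxy _ (Bs_shift j hk u hu)
  rw [show ((MvPowerSeries.X j : MvPowerSeries (Fin n) A) • l).1 = (MvPowerSeries.X j : MvPowerSeries (Fin n) A) • l.1 from rfl, co_X, add_sub_cancel_right] at this
  exact this

lemma X_bij (j : Fin n) :
    Function.Bijective (fun y : QQ A n (j+1) j => (MvPowerSeries.X j : MvPowerSeries (Fin n) A) • y) := by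
  refine ⟨X_inj _ _ j le_rfl, fun x => ?_⟩
  obtain ⟨l, rfl⟩ := qk_surj _ _ x
  have hm : xinv j l.1 ∈ LS (A := A) (Ws n (j+1)) (Ws_up n (j+1)) := by
    intro u hu
    rw [co_xinv]
    apply l.2
    intro h
    apply hu
    intro i hi
    have h1 := h i hi
    have : i ≠ j := by rintro rfl; omega
    simpa [Pi.single_apply, this] using h1
  refine ⟨qk _ _ ⟨_, hm⟩, ?_⟩
  simp only
  rw [← map_smul]
  congr 1
  apply Subtype.ext
  change (MvPowerSeries.X j : MvPowerSeries (Fin n) A) • xinv j l.1 = l.1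
  apply co_ext
  intro u
  rw [co_X, co_xinv, sub_add_cancel]

/-- lower bound of support in the negative orthant -/
lemma lowb (l : LL A n) : ∃ b : Fin n → ℤ, ∀ u, (∀ i, u i < 0) → co l u ≠ 0 → b ≤ u := by
  have hp := HahnSeries.isPWO_support (Γ := Fin n → ℤ) l
  have : ∀ i : Fin n, ∃ b : ℤ, ∀ u, co l u ≠ 0 → b ≤ u i := by
    intro i
    have h1 := (hp.image_of_monotone (f := fun u : Fin n → ℤ => u i) (fun a b h => h i)).isWF
    by_cases hne : ((fun u : Fin n → ℤ => u i) '' HahnSeries.support (Γ := Fin n → ℤ) l).Nonempty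
    · exact ⟨h1.min hne, fun u hu => h1.min_le hne ⟨u, hu, rfl⟩⟩
    · exact ⟨0, fun u hu => (hne ⟨_, u, hu, rfl⟩).elim⟩
  choose b hb using this
  exact ⟨b, fun u _ hu i => hb i u hu⟩

lemma co_Xpow (j : Fin n) (k : ℕ) (l : LL A n) (u) : co ((MvPowerSeries.X j : MvPowerSeries (Fin n) A)^k • l) u = co l (u - Pi.single j (k : ℤ)) := by
  induction k generalizing u with
  | zero => simp
  | succ k ih =>
    rw [pow_succ', mul_smul, co_X, ih]
    congr 1
    ext i
    by_cases h : i = j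
    · subst h; simp; ring
    · simp [h]

lemma notBs (u : Fin n → ℤ) : u ∉ Bs n n ↔ ∀ i, u i < 0 := by
  simp [Bs]

variable (A n) in
def II : Ideal (MvPowerSeries (Fin n) A) := Ideal.span (Set.range (MvPowerSeries.X : Fin n → MvPowerSeries (Fin n) A))

lemma X_mem (j : Fin n) : (MvPowerSeries.X j : MvPowerSeries (Fin n) A) ∈ II A n := Ideal.subset_span ⟨j, rfl⟩

lemma QQ_tor : ITor (II A n) (QQ A n n n) := by
  intro y
  obtain ⟨l, rfl⟩ := qk_surj _ _ y
  obtain ⟨b, hb⟩ := lowb l.1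
  have h : II A n ≤ (Ideal.torsionOf (MvPowerSeries (Fin n) A) _ (qk n n l)).radical := by
    unfold II
    rw [Ideal.span_le]
    rintro _ ⟨j, rfl⟩
    refine ⟨(-b j).toNat, ?_⟩
    rw [Ideal.mem_torsionOf_iff, ← map_smul, qk_zero]
    intro u hu
    rw [notBs] at hu
    change co ((MvPowerSeries.X j : MvPowerSeries (Fin n) A)^_ • l.1) u = 0
    rw [co_Xpow]
    by_contra hc
    have h2 := hb _ (fun i => ?_) hc
    · have h3 := h2 j
      have := hu j
      simp at h3
      omega
    · have := hu i
      by_cases h : i = j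
      · subst h; simp; omega
      · simp [h]; omega
  obtain ⟨k, hk⟩ := Ideal.exists_pow_le_of_le_radical_of_fg h (Submodule.fg_span (Set.finite_range _))
  exact ⟨k, fun r hr => hk hr⟩

end LC
end
end

section
noncomputable section
namespace LC
attribute [local irreducible] H Hmap hε T
variable {A : Type} [CommRing A] {n : ℕ}

lemma H_step (j : ℕ) (hj : j < n) (i : ℕ) : Nonempty (H (II A n) i (QQ A n (j+1) (j+1)) ≃ₗ[MvPowerSeries (Fin n) A] H (II A n) (i+1) (QQ A n j j)) := by
  obtain ⟨δ, e2, e3, e1⟩ := H_les (II A n) i (fE_inj (A := A) j) (fgE_exact j hj) (gE_surj j)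
  have hz : ∀ i, Subsingleton (H (II A n) i (QQ A n (j+1) j)) := fun i => H_bij (II A n) (X_mem ⟨j, hj⟩) (X_bij ⟨j, hj⟩) i
  refine ⟨LinearEquiv.ofBijective δ ⟨?_, ?_⟩⟩
  · rw [injective_iff_map_eq_zero]
    intro x hx
    obtain ⟨y, rfl⟩ := (e3 x).1 hx
    rw [(hz i).elim y 0, map_zero]
  · intro x
    exact (e1 x).1 ((hz (i+1)).elim _ _)

lemma H_steps (j : ℕ) (hj : j ≤ n) (i m : ℕ) (hm : m = i + j) : Nonempty (H (II A n) i (QQ A n j j) ≃ₗ[MvPowerSeries (Fin n) A] H (II A n) m (QQ A n 0 0)) := by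
  induction j generalizing i with
  | zero => obtain rfl : m = i := hm; exact ⟨LinearEquiv.refl _ _⟩
  | succ j ih =>
    obtain ⟨e⟩ := H_step (A := A) j hj i
    obtain ⟨e'⟩ := ih (by omega) (i+1) (by omega)
    exact ⟨e.trans e'⟩

def r00 : MvPowerSeries (Fin n) A →ₗ[MvPowerSeries (Fin n) A] QQ A n 0 0 :=
  qk 0 0 ∘ₗ LinearMap.codRestrict _ (Algebra.linearMap (MvPowerSeries (Fin n) A) (LL A n)) (by
    intro r u hu
    by_contra hc
    obtain ⟨v, rfl⟩ := co_emb_ne r u hc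
    apply hu
    intro i _
    simp [io])

lemma r00_bij : Function.Bijective (r00 (A := A) (n := n)) := by
  constructor
  · rw [injective_iff_map_eq_zero]
    intro r hr
    have := (qk_zero 0 0 _).1 hr
    ext v
    have := this (io n v) (by rintro ⟨i, hi, _⟩; omega)
    rw [← co_emb]
    exact this
  · intro y
    obtain ⟨l, rfl⟩ := qk_surj 0 0 y
    refine ⟨(fun v => co l.1 (io n v) : MvPowerSeries (Fin n) A), ?_⟩
    rw [← sub_eq_zero]
    change qk 0 0 _ - qk 0 0 l = 0
    rw [← map_sub, qk_zero]
    intro u _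
    change co (emb _ - l.1) u = 0
    rw [co_sub, sub_eq_zero]
    by_cases h : u ∈ Ws n 0
    · obtain ⟨v, rfl⟩ := mem_range_io u (fun i => h i (Nat.zero_le _))
      exact co_emb _ _
    · rw [l.2 u h]
      by_contra hc
      obtain ⟨v, rfl⟩ := co_emb_ne _ u hc
      apply h
      intro i _
      simp [io]

def Hcongr {R : Type} [CommRing R] (I : Ideal R) (i : ℕ) {N N' : Type} [AddCommGroup N] [Module R N] [AddCommGroup N'] [Module R N'] (e : N ≃ₗ[R] N') :
    H I i N ≃ₗ[R] H I i N' :=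
  { Hmap I i e.toLinearMap with
    invFun := Hmap I i e.symm.toLinearMap
    left_inv := fun x => Hequiv_symm I i e x
    right_inv := fun x => by simpa using Hequiv_symm I i e.symm x }

lemma HR_zero (i : ℕ) (hi : i < n) : Subsingleton (H (II A n) i (MvPowerSeries (Fin n) A)) := by
  obtain ⟨e⟩ := H_steps (A := A) i hi.le 0 i (by omega)
  have h := H0_zero (II A n) (X_mem ⟨i, hi⟩) (X_inj (A := A) i i ⟨i, hi⟩ le_rfl)
  exact ((Hcongr (II A n) i (LinearEquiv.ofBijective _ r00_bij)).trans e.symm).toEquiv.subsingleton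

lemma HR_top : Nonempty (H (II A n) n (MvPowerSeries (Fin n) A) ≃ₗ[MvPowerSeries (Fin n) A] QQ A n n n) := by
  obtain ⟨e⟩ := H_steps (A := A) n le_rfl 0 n (by omega)
  exact ⟨((Hcongr (II A n) n (LinearEquiv.ofBijective _ r00_bij)).trans e.symm).trans
    (LinearEquiv.ofBijective (hε (II A n)) ⟨hε_inj _, hε_surj _ QQ_tor⟩)⟩

/-! kappa -/
abbrev Sg (n : ℕ) := Fin n →₀ ℕ

lemma supp_fin (l : LL A n) : {v : Sg n | co l (-1 - io n v) ≠ 0}.Finite := by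
  obtain ⟨b, hb⟩ := lowb l
  have : Function.Injective (fun v : Sg n => -1 - io n v) := fun a b h => io_inj (by simpa using h)
  refine Set.Finite.subset ((Set.finite_Icc b (-1)).preimage this.injOn) ?_
  intro v hv
  refine ⟨hb _ (fun i => ?_) hv, fun i => ?_⟩
  · simp [io]; omega
  · simp [io]

def ka0 : LS (A := A) (Ws n n) (Ws_up n n) →+ (Sg n →₀ A) where
  toFun l := Finsupp.ofSupportFinite (fun v => co l.1 (-1 - io n v)) (supp_fin l.1)
  map_zero' := by ext v; exact co_zero _
  map_add' _ _ := by ext v; exact co_add _ _ _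

lemma ka0_apply (l : LS (A := A) (Ws n n) (Ws_up n n)) (v : Sg n) : ka0 l v = co l.1 (-1 - io n v) := rfl

lemma notBs' (u : Fin n → ℤ) : u ∉ Bs n n ↔ ∃ v, u = -1 - io n v := by
  rw [notBs]
  constructor
  · intro h
    obtain ⟨v, hv⟩ := mem_range_io (-1 - u) (fun i => by have := h i; simp; omega)
    exact ⟨v, by rw [hv]; simp⟩
  · rintro ⟨v, rfl⟩ i
    simp [io]; omega

def ka : QQ A n n n →+ (Sg n →₀ A) :=
  QuotientAddGroup.lift _ ka0 (by
    intro l hl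
    ext v
    exact hl _ ((notBs' _).2 ⟨v, rfl⟩))

lemma ka_qk (l) (v : Sg n) : ka (A := A) (qk n n l) v = co l.1 (-1 - io n v) := rfl

lemma ka_bij : Function.Bijective (ka (A := A) (n := n)) := by
  constructor
  · rw [injective_iff_map_eq_zero]
    intro y hy
    obtain ⟨l, rfl⟩ := qk_surj _ _ y
    rw [qk_zero]
    intro u hu
    obtain ⟨v, rfl⟩ := (notBs' u).1 hu
    rw [← ka_qk, hy]; rfl
  · intro f
    have hinj : Function.Injective (fun v : Sg n => -1 - io n v) := fun a b h => io_inj (by simpa using h)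
    let f' : (Fin n → ℤ) →₀ A := f.mapDomain (fun v : Sg n => -1 - io n v)
    let l : LL A n := (⟨f', (Set.Finite.isPWO f'.hasFiniteSupport)⟩ : HahnSeries (Fin n → ℤ) A)
    refine ⟨qk n n ⟨l, ?_⟩, ?_⟩
    · intro u hu
      exfalso; apply hu
      intro i hi
      omega
    · ext v
      rw [ka_qk]
      exact Finsupp.mapDomain_apply hinj f v

lemma ka_C (a : A) (y : QQ A n n n) : ka ((MvPowerSeries.C a : MvPowerSeries (Fin n) A) • y) = a • ka y := by
  obtain ⟨l, rfl⟩ := qk_surj _ _ y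
  ext v
  rw [← map_smul, ka_qk]
  exact co_C _ _ _

def rho (y : QQ A n n n) : A := ka y 0

lemma rho_smul (r : MvPowerSeries (Fin n) A) (y : QQ A n n n) : rho (r • y) = (ka y).sum (fun v a => a * MvPowerSeries.coeff v r) := by
  obtain ⟨l, rfl⟩ := qk_surj _ _ y
  unfold rho
  rw [← map_smul, ka_qk, map_zero, sub_zero]
  change HahnSeries.coeff (Γ := Fin n → ℤ) (emb r * l.1) (-1) = _
  have h1 := HahnSeries.coeff_mul (Γ := Fin n → ℤ) (x := emb r) (y := l.1) (a := -1)
  refine h1.trans ?_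
  unfold Finsupp.sum
  have hinj : Function.Injective (fun v : Sg n => (io n v, -1 - io n v)) := fun a b h => io_inj (Prod.ext_iff.1 h).1
  have h2 : ∑ v ∈ (ka (qk n n l)).support, (ka (qk n n l)) v * MvPowerSeries.coeff v r =
      ∑ p ∈ (ka (qk n n l)).support.map ⟨_, hinj⟩, co (emb r) p.1 * co l.1 p.2 := by
    rw [Finset.sum_map]
    apply Finset.sum_congr rfl
    intro v _
    change _ = co (emb r) (io n v) * co l.1 (-1 - io n v)
    rw [co_emb, mul_comm]
    rfl
  refine Eq.trans ?_ h2.symm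
  apply Finset.sum_subset
  · rintro ⟨a, b⟩ hab
    rw [Finset.mem_addAntidiagonal] at hab
    obtain ⟨v, rfl⟩ := co_emb_ne r a hab.1
    have hb : b = -1 - io n v := by rw [← hab.2.2]; simp
    subst hb
    rw [Finset.mem_map]
    exact ⟨v, Finsupp.mem_support_iff.2 hab.2.1, rfl⟩
  · rintro ⟨a, b⟩ h1 h2
    rw [Finset.mem_addAntidiagonal] at h2
    rw [Finset.mem_map] at h1
    obtain ⟨v, hv, h⟩ := h1
    obtain ⟨rfl, rfl⟩ := Prod.ext_iff.1 h
    by_contra hc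
    apply h2
    exact ⟨left_ne_zero_of_mul hc, right_ne_zero_of_mul hc, by simp⟩
end LC
end
end

section
noncomputable section
namespace LC
open scoped TensorProduct
variable {A : Type} [CommRing A]

lemma free_of_iso (g : A) {H P : Type} [AddCommGroup H] [Module A H] [AddCommGroup P] [Module A P] [Module.Free A P]
    (f : H →ₗ[A] P) (hk : ∀ x, f x = 0 → ∃ k : ℕ, g ^ k • x = 0) (hc : ∀ y, ∃ k : ℕ, ∃ x, f x = g ^ k • y) :
    Module.Free (Localization.Away g) (Localization.Away g ⊗[A] H) := by
  let l : P →ₗ[A] Localization.Away g ⊗[A] P := TensorProduct.mk A (Localization.Away g) P 1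
  have hl : IsLocalizedModule (Submonoid.powers g) l := inferInstance
  have : IsLocalizedModule (Submonoid.powers g) (l ∘ₗ f) := by
    refine ⟨hl.map_units, ?_, ?_⟩
    · intro y
      obtain ⟨⟨p, s⟩, hs⟩ := hl.surj y
      obtain ⟨k, x, hx⟩ := hc p
      refine ⟨⟨x, ⟨g ^ k, k, rfl⟩ * s⟩, ?_⟩
      simp only [LinearMap.comp_apply] at hs ⊢
      rw [hx, map_smul, ← hs, mul_smul]
      rfl
    · intro x x' h
      obtain ⟨s, hs⟩ := hl.exists_of_eq h
      have h1 : f ((s : A) • (x - x')) = 0 := by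
        rw [map_smul, map_sub, smul_sub, sub_eq_zero]; exact hs
      obtain ⟨k, hk⟩ := hk _ h1
      refine ⟨⟨g ^ k, k, rfl⟩ * s, ?_⟩
      rw [← sub_eq_zero, ← smul_sub, mul_smul]
      exact hk
  have hb := IsLocalizedModule.isBaseChange (Submonoid.powers g) (Localization.Away g) (l ∘ₗ f)
  exact Module.Free.of_equiv hb.equiv.symm

section lin
variable {N : Type} [AddCommGroup N] [Module A N] {ι : Type} (rk : ι → ℕ) (c : ι → N →ₗ[A] A)

def F (m : ℕ) : Submodule A N where
  carrier := {x | ∀ w, rk w < m → c w x = 0}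
  zero_mem' := by intro w _; simp
  add_mem' := by intro a b ha hb w hw; rw [map_add, ha w hw, hb w hw, add_zero]
  smul_mem' := by intro r a ha w hw; rw [map_smul, ha w hw, smul_zero]

/-- set of leading indices -/
def SL (V : Submodule A N) : Set ι := {w | ∃ x ∈ V, x ∈ F rk c (rk w) ∧ c w x ≠ 0}

def GG (V : Submodule A N) (g : A) : Prop := ∀ w ∈ SL rk c V, ∃ x ∈ V, x ∈ F rk c (rk w) ∧ c w x = g

lemma GG.mul {V : Submodule A N} {g : A} (h : GG rk c V g) (a : A) : GG rk c V (a * g) := by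
  intro w hw
  obtain ⟨x, hx, hx', hg⟩ := h w hw
  exact ⟨a • x, V.smul_mem _ hx, Submodule.smul_mem _ _ hx', by rw [map_smul, hg]; rfl⟩

variable {rk}
lemma red [IsDomain A] (hrk : Function.Injective rk) {V : Submodule A N} {g : A} (hg : g ≠ 0) (b : ι → N)
    (hbF : ∀ u ∈ SL rk c V, b u ∈ F rk c (rk u))
    (hbV : ∀ u ∈ SL rk c V, b u ∈ V)
    (hbg : ∀ u ∈ SL rk c V, c u (b u) = g)
    (φ : N →ₗ[A] A) (m : ℕ) (hm : ∀ x ∈ V, x ∈ F rk c m → φ x = 0) (hφ : ∀ u ∈ SL rk c V, φ (b u) = 0) :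
    ∀ x ∈ V, φ x = 0 := by
  have key : ∀ d m', m' + d = m → ∀ x ∈ V, x ∈ F rk c m' → φ x = 0 := by
    intro d
    induction d with
    | zero => intro m' h; obtain rfl : m' = m := h; exact hm
    | succ d ih =>
      intro m' h x hx hxF
      have ih' := ih (m'+1) (by omega)
      by_cases hw : ∃ w, rk w = m' ∧ c w x ≠ 0
      · obtain ⟨w, rfl, hcw⟩ := hw
        have hS : w ∈ SL rk c V := ⟨x, hx, hxF, hcw⟩
        have h1 : φ (g • x - c w x • b w) = 0 := by
          apply ih'
          · exact V.sub_mem (V.smul_mem _ hx) (V.smul_mem _ (hbV w hS))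
          · intro w' hw'
            rw [map_sub, map_smul, map_smul]
            rcases Nat.lt_succ_iff_lt_or_eq.1 hw' with h' | h'
            · rw [hxF w' h', hbF w hS w' h']; simp
            · obtain rfl := hrk h'
              rw [hbg w' hS]; simp [mul_comm]
        rw [map_sub, map_smul, map_smul, hφ w hS, smul_zero, sub_zero, smul_eq_mul] at h1
        exact (mul_eq_zero.1 h1).resolve_left hg
      · push Not at hw
        apply ih' x hx
        intro w hw'
        rcases Nat.lt_succ_iff_lt_or_eq.1 hw' with h' | h'
        · exact hxF w h'
        · exact hw w h'
  intro x hx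
  exact key m 0 (by omega) x hx (fun w hw => by omega)

lemma tri (hrk : Function.Injective rk) (S : Set ι) {g : A} (b : ι → N)
    (hbF : ∀ u ∈ S, b u ∈ F rk c (rk u)) (hbg : ∀ u ∈ S, c u (b u) = g) (m : ℕ) :
    ∀ (y : ι → A), (∀ u ∈ S, m ≤ rk u → y u = 0) → ∃ k : ℕ, ∃ φ ∈ Submodule.span A (Set.range c),
      ∀ u ∈ S, φ (b u) = g ^ k * y u := by
  induction m with
  | zero =>
    intro y hy
    exact ⟨0, 0, Submodule.zero_mem _, fun u hu => by simp [hy u hu (Nat.zero_le _)]⟩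
  | succ m ih =>
    intro y hy
    by_cases hw : ∃ w ∈ S, rk w = m
    · obtain ⟨w, hwS, rfl⟩ := hw
      obtain ⟨k, φ, hφ, h⟩ := ih (fun u => g * y u - y w * c w (b u)) (by
        intro u hu hle
        rcases Nat.eq_or_lt_of_le hle with h' | h'
        · obtain rfl := hrk h'
          rw [hbg w hu]; ring
        · rw [hy u hu h', hbF u hu w h']; ring)
      refine ⟨k+1, φ + (g ^ k * y w) • c w, Submodule.add_mem _ hφ (Submodule.smul_mem _ _ (Submodule.subset_span ⟨w, rfl⟩)), ?_⟩
      intro u hu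
      rw [LinearMap.add_apply, h u hu, LinearMap.smul_apply, smul_eq_mul]
      ring
    · apply ih y
      intro u hu hle
      apply hy u hu
      rcases Nat.eq_or_lt_of_le hle with h' | h'
      · exact (hw ⟨u, hu, h'.symm⟩).elim
      · exact h'

lemma span_cont {φ : N →ₗ[A] A} (h : φ ∈ Submodule.span A (Set.range c)) : ∃ m, ∀ x ∈ F rk c m, φ x = 0 := by
  induction h using Submodule.span_induction with
  | mem x h => obtain ⟨w, rfl⟩ := h; exact ⟨rk w + 1, fun x hx => hx w (Nat.lt_succ_self _)⟩
  | zero => exact ⟨0, by simp⟩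
  | add a b _ _ ha hb =>
    obtain ⟨m, hm⟩ := ha
    obtain ⟨m', hm'⟩ := hb
    refine ⟨max m m', fun x hx => ?_⟩
    rw [LinearMap.add_apply, hm x (fun w hw => hx w (lt_max_of_lt_left hw)), hm' x (fun w hw => hx w (lt_max_of_lt_right hw)), add_zero]
  | smul a b _ hb =>
    obtain ⟨m, hm⟩ := hb
    exact ⟨m, fun x hx => by rw [LinearMap.smul_apply, hm x hx, smul_zero]⟩

variable (rk) in
def KK (U : Submodule A N) : Submodule A (N →ₗ[A] A) where
  carrier := {φ | (∃ m, ∀ x ∈ F rk c m, φ x = 0) ∧ ∀ x ∈ U, φ x = 0}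
  zero_mem' := ⟨⟨0, by simp⟩, by simp⟩
  add_mem' := by
    rintro a b ⟨⟨m, hm⟩, ha⟩ ⟨⟨m', hm'⟩, hb⟩
    refine ⟨⟨max m m', fun x hx => ?_⟩, fun x hx => ?_⟩
    · rw [LinearMap.add_apply, hm x (fun w hw => hx w (lt_max_of_lt_left hw)), hm' x (fun w hw => hx w (lt_max_of_lt_right hw)), add_zero]
    · rw [LinearMap.add_apply, ha x hx, hb x hx, add_zero]
  smul_mem' := by
    rintro r a ⟨⟨m, hm⟩, ha⟩
    refine ⟨⟨m, fun x hx => ?_⟩, fun x hx => ?_⟩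
    · rw [LinearMap.smul_apply, hm x hx, smul_zero]
    · rw [LinearMap.smul_apply, ha x hx, smul_zero]

def Th (U : Submodule A N) {T : Type} (b : T → N) (hfin : ∀ φ : KK rk c U, {u : T | φ.1 (b u) ≠ 0}.Finite) :
    KK rk c U →ₗ[A] (T →₀ A) where
  toFun := fun φ => Finsupp.ofSupportFinite (fun u : T => φ.1 (b u)) (hfin φ)
  map_add' := fun _ _ => by ext u; rfl
  map_smul' := fun _ _ => by ext u; rfl

lemma fact_surj {K H P : Type} [AddCommGroup K] [Module A K] [AddCommGroup H] [Module A H] [AddCommGroup P] [Module A P]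
    (π : K →ₗ[A] H) (hπ : Function.Surjective π) (Θ : K →ₗ[A] P) (hker : ∀ x, π x = 0 → Θ x = 0) :
    ∃ f : H →ₗ[A] P, ∀ x, f (π x) = Θ x := by
  have hk : LinearMap.ker π ≤ LinearMap.ker Θ := fun x hx => hker x hx
  refine ⟨(LinearMap.ker π).liftQ Θ hk ∘ₗ (π.quotKerEquivOfSurjective hπ).symm.toLinearMap, fun φ => ?_⟩
  change (LinearMap.ker π).liftQ Θ hk ((π.quotKerEquivOfSurjective hπ).symm (π φ)) = _
  have : (π.quotKerEquivOfSurjective hπ).symm (π φ) = Submodule.Quotient.mk φ := by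
    rw [LinearEquiv.symm_apply_eq]; rfl
  rw [this]; rfl

theorem C_abs [IsDomain A] (hrk : Function.Injective rk) {ι' : Type} {rk' : ι' → ℕ} (hrk' : Function.Injective rk')
    (c' : ι' → N →ₗ[A] A) (U V : Submodule A N) (hUV : U ≤ V) (hV : ∀ x ∈ V, ∀ w, c' w x = 0)
    (hAR : ∀ m, ∃ m', ∀ x ∈ F rk' c' m', x ∈ F rk c m ⊔ V)
    (g : A) (hg : g ≠ 0) (gU : GG rk c U g) (gV : GG rk c V g) (gW : GG rk' c' ⊤ g)
    {H : Type} [AddCommGroup H] [Module A H] (π : KK rk c U →ₗ[A] H) (hπ : Function.Surjective π)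
    (hπ0 : ∀ φ, π φ = 0 ↔ φ.1 ∈ Submodule.span A (Set.range c')) :
    Module.Free (Localization.Away g) (Localization.Away g ⊗[A] H) := by
  classical
  have hSUV : SL rk c U ⊆ SL rk c V := fun w ⟨x, hx, h⟩ => ⟨x, hUV hx, h⟩
  -- choose b
  have hb : ∀ u : ι, ∃ b : N, (u ∈ SL rk c V → b ∈ V ∧ b ∈ F rk c (rk u) ∧ c u b = g) ∧ (u ∈ SL rk c U → b ∈ U) := by
    intro u
    by_cases h : u ∈ SL rk c U
    · obtain ⟨x, hx, hF, hc⟩ := gU u h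
      exact ⟨x, fun _ => ⟨hUV hx, hF, hc⟩, fun _ => hx⟩
    · by_cases h' : u ∈ SL rk c V
      · obtain ⟨x, hx, hF, hc⟩ := gV u h'
        exact ⟨x, fun _ => ⟨hx, hF, hc⟩, fun h'' => (h h'').elim⟩
      · exact ⟨0, fun h'' => (h' h'').elim, fun h'' => (h h'').elim⟩
  choose b hbV hbU using hb
  have hb' : ∀ u : ι', ∃ b : N, (u ∈ SL rk' c' ⊤ → b ∈ F rk' c' (rk' u) ∧ c' u b = g) := by
    intro u
    by_cases h' : u ∈ SL rk' c' ⊤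
    · obtain ⟨x, hx, hF, hc⟩ := gW u h'
      exact ⟨x, fun _ => ⟨hF, hc⟩⟩
    · exact ⟨0, fun h'' => (h' h'').elim⟩
  choose b' hb' using hb'
  obtain ⟨T, ti, hti, hT⟩ : ∃ (T : Type) (ti : T → ι), Function.Injective ti ∧ ∀ u, (∃ t, ti t = u) ↔ (u ∈ SL rk c V ∧ u ∉ SL rk c U) :=
    ⟨{u : ι // u ∈ SL rk c V ∧ u ∉ SL rk c U}, Subtype.val, Subtype.val_injective, fun u => ⟨fun ⟨t, ht⟩ => ht ▸ t.2, fun h => ⟨⟨u, h⟩, rfl⟩⟩⟩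
  have hTV : ∀ t, ti t ∈ SL rk c V := fun t => ((hT _).1 ⟨t, rfl⟩).1
  have hfin : ∀ φ : KK rk c U, {u : T | φ.1 (b (ti u)) ≠ 0}.Finite := by
    intro φ
    obtain ⟨m, hm⟩ := φ.2.1
    refine Set.Finite.subset ((Set.finite_Iio m).preimage (f := fun u : T => rk (ti u)) (fun a _ b _ h => hti (hrk h))) ?_
    intro u hu
    by_contra hc
    apply hu
    apply hm
    intro w hw
    simp only [Set.mem_preimage, Set.mem_Iio, not_lt] at hc
    exact (hbV (ti u) (hTV u)).2.1 w (by omega)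
  obtain ⟨Θ, hΘ⟩ : ∃ Θ : KK rk c U →ₗ[A] (T →₀ A), ∀ φ u, Θ φ u = φ.1 (b (ti u)) := ⟨Th c U (fun u => b (ti u)) hfin, fun _ _ => rfl⟩
  have hspan : ∀ φ ∈ Submodule.span A (Set.range c'), ∀ x ∈ V, φ x = 0 := by
    intro φ hφ x hx
    induction hφ using Submodule.span_induction with
    | mem y h => obtain ⟨w, rfl⟩ := h; exact hV x hx w
    | zero => rfl
    | add a b _ _ ha hb => rw [LinearMap.add_apply, ha, hb, add_zero]
    | smul a b _ hb => rw [LinearMap.smul_apply, hb, smul_zero]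
  have hker : ∀ φ, π φ = 0 → Θ φ = 0 := by
    intro φ hφ
    have h1 := (hπ0 φ).1 hφ
    ext u
    rw [hΘ]
    exact hspan _ h1 _ (hbV (ti u) (hTV u)).1
  obtain ⟨f, hf⟩ := fact_surj (A := A) (K := KK rk c U) (H := H) (P := T →₀ A) π hπ Θ hker
  refine free_of_iso g f ?_ ?_
  · intro x hx
    obtain ⟨φ, rfl⟩ := hπ x
    rw [hf] at hx
    obtain ⟨m, hm⟩ := φ.2.1
    have h1 : ∀ x ∈ V, φ.1 x = 0 := by
      refine red c hrk hg b (fun u hu => (hbV u hu).2.1) (fun u hu => (hbV u hu).1) (fun u hu => (hbV u hu).2.2) φ.1 m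
        (fun x _ hx => hm x hx) ?_
      intro u hu
      by_cases hU : u ∈ SL rk c U
      · exact φ.2.2 _ (hbU u hU)
      · obtain ⟨t, rfl⟩ := (hT u).2 ⟨hu, hU⟩
        rw [← hΘ, hx]; rfl
    obtain ⟨m', hm'⟩ := hAR m
    have h2 : ∀ x ∈ F rk' c' m', φ.1 x = 0 := by
      intro x hx
      obtain ⟨y, hy, z, hz, rfl⟩ := Submodule.mem_sup.1 (hm' x hx)
      rw [map_add, hm y hy, h1 z hz, add_zero]
    obtain ⟨k, ψ, hψ, h3⟩ := tri c' hrk' (SL rk' c' ⊤) b' (fun u hu => (hb' u hu).1) (fun u hu => (hb' u hu).2) m' (fun u => φ.1 (b' u)) (by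
      intro u hu hle
      apply h2
      intro w hw
      exact (hb' u hu).1 w (by omega))
    obtain ⟨m'', hm''⟩ := span_cont (rk := rk') c' hψ
    refine ⟨k, ?_⟩
    rw [← map_smul, hπ0]
    have h4 : ∀ x ∈ (⊤ : Submodule A N), (ψ - g ^ k • φ.1) x = 0 := by
      refine red c' hrk' hg b' (fun u hu => (hb' u hu).1) (fun _ _ => trivial) (fun u hu => (hb' u hu).2) _ (max m' m'') ?_ ?_
      · intro x _ hx
        rw [LinearMap.sub_apply, LinearMap.smul_apply, h2 x (fun w hw => hx w (lt_max_of_lt_left hw)), hm'' x (fun w hw => hx w (lt_max_of_lt_right hw))]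
        simp
      · intro u hu
        rw [LinearMap.sub_apply, LinearMap.smul_apply, h3 u hu]
        simp
    have h5 : (g ^ k • φ).1 = ψ := by
      ext x
      have := h4 x trivial
      rw [LinearMap.sub_apply, sub_eq_zero] at this
      exact this.symm
    rw [h5]; exact hψ
  · intro y
    obtain ⟨y', hy', hy0⟩ : ∃ y' : ι → A, (∀ t, y' (ti t) = y t) ∧ ∀ u, u ∈ SL rk c U → y' u = 0 := by
      refine ⟨Function.extend ti y 0, fun t => hti.extend_apply _ _ _, fun u hu => ?_⟩
      rw [Function.extend_apply' _ _ _ (fun h => ((hT u).1 h).2 hu)]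
      rfl
    have hbd : ∃ m, ∀ u : T, m ≤ rk (ti u) → y u = 0 := by
      refine ⟨y.support.sup (fun u => rk (ti u)) + 1, fun u hu => ?_⟩
      by_contra hc
      have := Finset.le_sup (f := fun u : T => rk (ti u)) (Finsupp.mem_support_iff.2 hc)
      omega
    obtain ⟨m, hm⟩ := hbd
    obtain ⟨k, φ, hφ, h3⟩ := tri c hrk (SL rk c V) b (fun u hu => (hbV u hu).2.1) (fun u hu => (hbV u hu).2.2) m y' (by
      intro u hu hle
      by_cases h : u ∈ SL rk c U
      · exact hy0 u h
      · obtain ⟨t, rfl⟩ := (hT u).2 ⟨hu, h⟩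
        rw [hy']
        exact hm t hle)
    obtain ⟨m', hm'⟩ := span_cont (rk := rk) c hφ
    have hU : ∀ x ∈ U, φ x = 0 := by
      refine red c hrk hg b (fun u hu => (hbV u (hSUV hu)).2.1) (fun u hu => hbU u hu) (fun u hu => (hbV u (hSUV hu)).2.2) φ m'
        (fun x _ hx => hm' x hx) ?_
      intro u hu
      rw [h3 u (hSUV hu)]
      rw [hy0 u hu, mul_zero]
    refine ⟨k, π ⟨φ, ⟨m', hm'⟩, hU⟩, ?_⟩
    rw [hf]
    ext u
    rw [hΘ]
    rw [Finsupp.smul_apply, smul_eq_mul, ← hy', h3 _ (hTV u)]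
end lin
end LC
end
end

section
noncomputable section
namespace LC
variable {A : Type} [CommRing A] {n : ℕ}

abbrev PS (A : Type) [CommRing A] (n : ℕ) := MvPowerSeries (Fin n) A

abbrev Ix (b n : ℕ) := Fin b × Sg n

def lx {b n : ℕ} (w : Ix b n) : DegLex (Fin n →₀ ℕ) ×ₗ Fin b := toLex (toDegLex w.2, w.1)

lemma lx_inj {b n : ℕ} : Function.Injective (lx (b := b) (n := n)) := by
  intro w w' h
  have h1 : (toDegLex w.2, w.1) = (toDegLex w'.2, w'.1) := toLex.injective h
  rw [Prod.mk.injEq] at h1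
  exact Prod.ext h1.2 (toDegLex_injective h1.1)

lemma deg_fin (n d : ℕ) : {v : Sg n | v.degree ≤ d}.Finite := by
  have : Function.Injective (fun v : Sg n => (v : Fin n → ℕ)) := DFunLike.coe_injective
  refine Set.Finite.subset ((Set.finite_Icc (0 : Fin n → ℕ) (fun _ => d)).preimage this.injOn) ?_
  intro v hv
  refine ⟨fun i => Nat.zero_le _, fun i => ?_⟩
  exact (Finsupp.le_degree i v).trans hv

lemma ix_fin (b n d : ℕ) : {w : Ix b n | w.2.degree ≤ d}.Finite := by
  refine Set.Finite.subset ((Set.finite_univ (α := Fin b)).prod (deg_fin n d)) ?_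
  intro w hw
  exact ⟨trivial, hw⟩

lemma lx_deg {b n : ℕ} {w w' : Ix b n} (h : lx w ≤ lx w') : w.2.degree ≤ w'.2.degree := by
  have h1 : toDegLex w.2 ≤ toDegLex w'.2 := by
    rcases Prod.Lex.le_iff.1 h with h | h
    · exact le_of_lt h
    · exact le_of_eq h.1
  exact Finsupp.DegLex.monotone_degree h1

lemma lx_fin {b n : ℕ} (w : Ix b n) : {w' : Ix b n | lx w' < lx w}.Finite :=
  (ix_fin b n w.2.degree).subset (fun _ h => lx_deg (le_of_lt h))

def rk {b n : ℕ} (w : Ix b n) : ℕ := {w' : Ix b n | lx w' < lx w}.ncard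

lemma rk_lt {b n : ℕ} (w w' : Ix b n) : rk w < rk w' ↔ lx w < lx w' := by
  have h : ∀ w w' : Ix b n, lx w < lx w' → rk w < rk w' := by
    intro w w' h
    apply Set.ncard_lt_ncard _ (lx_fin w')
    refine ⟨fun z hz => lt_trans hz h, fun hc => ?_⟩
    exact lt_irrefl (lx w) (hc (show w ∈ {z | lx z < lx w'} from h))
  refine ⟨fun hr => ?_, h w w'⟩
  by_contra hc
  rcases lt_or_eq_of_le (not_lt.1 hc) with h' | h'
  · have := h _ _ h'; omega
  · rw [lx_inj h'] at hr; omega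

lemma rk_inj {b n : ℕ} : Function.Injective (rk (b := b) (n := n)) := by
  intro w w' h
  by_contra hc
  rcases lt_or_gt_of_ne (fun h => hc (lx_inj h)) with h' | h'
  · have := (rk_lt _ _).2 h'; omega
  · have := (rk_lt _ _).2 h'; omega

lemma rk_add {b n : ℕ} (w w' : Ix b n) (t : Sg n) : rk (w.1, w.2 + t) < rk (w'.1, w'.2 + t) ↔ rk w < rk w' := by
  rw [rk_lt, rk_lt]
  unfold lx
  rw [Prod.Lex.toLex_lt_toLex, Prod.Lex.toLex_lt_toLex]
  simp only [toDegLex_add, add_lt_add_iff_right, add_left_inj]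

lemma rk_fin {b n : ℕ} (m : ℕ) : {w : Ix b n | rk w < m}.Finite :=
  (Set.finite_Iio m).preimage rk_inj.injOn

/-! coordinates -/
variable {N : Type} [AddCommGroup N] [Module (PS A n) N] [Module A N] [IsScalarTower A (PS A n) N] {b : ℕ}

def cfd (d : N →ₗ[PS A n] (Fin b → PS A n)) (w : Ix b n) : N →ₗ[A] A where
  toFun x := MvPowerSeries.coeff w.2 (d x w.1)
  map_add' x y := by rw [map_add, Pi.add_apply, map_add]
  map_smul' a x := by
    rw [← algebraMap_smul (PS A n) a x, map_smul, Pi.smul_apply, algebraMap_smul, MvPowerSeries.coeff_smul]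
    rfl

lemma cfd_apply (d : N →ₗ[PS A n] (Fin b → PS A n)) (w : Ix b n) (x : N) : cfd d w x = MvPowerSeries.coeff w.2 (d x w.1) := rfl

lemma cfd_mon (d : N →ₗ[PS A n] (Fin b → PS A n)) (w : Ix b n) (t : Sg n) (a : A) (x : N) :
    cfd d w (MvPowerSeries.monomial t a • x) = if t ≤ w.2 then a * cfd d (w.1, w.2 - t) x else 0 := by
  rw [cfd_apply, map_smul, Pi.smul_apply, smul_eq_mul, MvPowerSeries.coeff_monomial_mul]
  rfl

lemma mon_F (d : N →ₗ[PS A n] (Fin b → PS A n)) (w : Ix b n) (t : Sg n) (a : A) (x : N) (hx : x ∈ F rk (cfd d) (rk w)) :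
    (MvPowerSeries.monomial t a : PS A n) • x ∈ F rk (cfd d) (rk (w.1, w.2 + t)) := by
  intro w' hw'
  rw [cfd_mon]
  split_ifs with h
  · rw [hx (w'.1, w'.2 - t), mul_zero]
    rw [← rk_add _ _ t]
    simp only [tsub_add_cancel_of_le h]
    exact hw'
  · rfl

lemma GG_exists [IsDomain A] (d : N →ₗ[PS A n] (Fin b → PS A n)) (V : Submodule (PS A n) N) :
    ∃ g : A, g ≠ 0 ∧ GG rk (cfd d) (V.restrictScalars A) g := by
  classical
  let S := SL rk (cfd d) (V.restrictScalars A)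
  let Mn : Set (Ix b n) := {w | Minimal (fun v => (w.1, v) ∈ S) w.2}
  have hfin : Mn.Finite := by
    have h1 : Mn ⊆ ⋃ j : Fin b, (fun v => (j, v)) '' {v : Sg n | Minimal (fun v => (j, v) ∈ S) v} := by
      intro w hw
      exact Set.mem_iUnion.2 ⟨w.1, w.2, hw, rfl⟩
    refine Set.Finite.subset (Set.finite_iUnion fun j => Set.Finite.image _ ?_) h1
    exact WellQuasiOrderedLE.finite_of_isAntichain (setOfPred_minimal_antichain _)
  have hx : ∀ w : Ix b n, ∃ x : N, w ∈ Mn → x ∈ V ∧ x ∈ F rk (cfd d) (rk w) ∧ cfd d w x ≠ 0 := by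
    intro w
    by_cases hw : w ∈ Mn
    · obtain ⟨x, h⟩ := hw.1
      exact ⟨x, fun _ => h⟩
    · exact ⟨0, fun h => (hw h).elim⟩
  choose x hx using hx
  refine ⟨∏ w ∈ hfin.toFinset, cfd d w (x w), ?_, ?_⟩
  · rw [Finset.prod_ne_zero_iff]
    intro w hw
    exact (hx w (hfin.mem_toFinset.1 hw)).2.2
  · rintro ⟨j, v⟩ hv
    obtain ⟨v0, hle, hm⟩ := exists_minimal_le_of_wellFoundedLT (fun v => (j, v) ∈ S) v hv
    have hM : (j, v0) ∈ Mn := hm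
    obtain ⟨e, he⟩ : cfd d (j, v0) (x (j, v0)) ∣ ∏ w ∈ hfin.toFinset, cfd d w (x w) :=
      Finset.dvd_prod_of_mem _ (hfin.mem_toFinset.2 hM)
    obtain ⟨t, rfl⟩ := exists_add_of_le hle
    refine ⟨(MvPowerSeries.monomial t e : PS A n) • x (j, v0), V.smul_mem _ (hx _ hM).1, mon_F d (j, v0) t e _ (hx _ hM).2.1, ?_⟩
    rw [cfd_mon, he, if_pos (by exact le_add_self)]
    simp only [add_tsub_cancel_right]
    rw [mul_comm]

/-! powers of I -/
lemma mem_pow_coeff (t : ℕ) : ∀ r ∈ (II A n) ^ t, ∀ v : Sg n, v.degree < t → MvPowerSeries.coeff v r = 0 := by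
  have h : ∀ t : ℕ, ∀ r ∈ (II A n) ^ t, (t : ℕ∞) ≤ MvPowerSeries.order r := by
    have hadd : ∀ (t : ℕ∞) (r s : PS A n), t ≤ r.order → t ≤ s.order → t ≤ (r + s).order := fun t r s h1 h2 => (le_min h1 h2).trans (MvPowerSeries.min_order_le_add)
    have h1 : ∀ r ∈ II A n, (1 : ℕ∞) ≤ MvPowerSeries.order r := by
      intro r hr
      unfold II at hr
      induction hr using Submodule.span_induction with
      | mem x h =>
        obtain ⟨j, rfl⟩ := h
        apply MvPowerSeries.le_order
        intro d hd
        have : d.degree = 0 := by simpa using hd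
        rw [Finsupp.degree_eq_zero_iff] at this
        subst this
        exact MvPowerSeries.coeff_zero_X j
      | zero => simp
      | add a b _ _ ha hb => exact hadd _ _ _ ha hb
      | smul a b _ hb => exact (le_add_left hb).trans (MvPowerSeries.le_order_mul)
    intro t
    induction t with
    | zero => intro r _; simp
    | succ t ih =>
      intro r hr
      rw [pow_succ] at hr
      induction hr using Submodule.mul_induction_on' with
      | mem_mul_mem a ha b hb =>
        push_cast
        exact (add_le_add (ih a ha) (h1 b hb)).trans (MvPowerSeries.le_order_mul)
      | add a _ b _ ha hb => exact hadd _ _ _ ha hb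
  intro r hr v hv
  apply MvPowerSeries.coeff_of_lt_order
  exact lt_of_lt_of_le (by exact_mod_cast hv) (h t r hr)

lemma coeff_mem_pow (t : ℕ) : ∀ r : PS A n, (∀ v : Sg n, v.degree < t → MvPowerSeries.coeff v r = 0) → r ∈ (II A n) ^ t := by
  classical
  induction t with
  | zero => intro r _; simp
  | succ t ih =>
    intro r hr
    let q : Fin n → PS A n := fun i => (fun w : Sg n => if ∀ i' < i, w i' = 0 then MvPowerSeries.coeff (w + Finsupp.single i 1) r else 0)
    have hq : ∀ i w, MvPowerSeries.coeff w (q i) = if ∀ i' < i, w i' = 0 then MvPowerSeries.coeff (w + Finsupp.single i 1) r else 0 := fun _ _ => rfl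
    have h1 : r = ∑ i, MvPowerSeries.X i * q i := by
      ext v
      rw [map_sum]
      have h2 : ∀ i, MvPowerSeries.coeff v (MvPowerSeries.X i * q i) = if (v i ≠ 0 ∧ ∀ i' < i, v i' = 0) then MvPowerSeries.coeff v r else 0 := by
        intro i
        rw [MvPowerSeries.X_def, MvPowerSeries.coeff_monomial_mul, one_mul, hq]
        by_cases hi : v i = 0
        · rw [if_neg, if_neg]
          · simp [hi]
          · intro h
            have := h i
            simp [hi] at this
        · have hle : Finsupp.single i 1 ≤ v := by
            rw [Finsupp.single_le_iff]; omega
          rw [if_pos hle, tsub_add_cancel_of_le hle]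
          congr 1
          rw [eq_iff_iff]
          constructor
          · intro h
            refine ⟨hi, fun i' hi' => ?_⟩
            have := h i' hi'
            rw [Finsupp.tsub_apply, Finsupp.single_eq_of_ne (ne_of_lt hi')] at this
            exact this
          · intro h i' hi'
            rw [Finsupp.tsub_apply, h.2 i' hi', Nat.zero_sub]
      simp_rw [h2]
      by_cases hv : v = 0
      · subst hv
        rw [hr 0 (by simp)]
        simp
      · have hex : ∃ i, v i ≠ 0 := by
          by_contra hc
          push Not at hc
          exact hv (Finsupp.ext hc)
        obtain ⟨i, hi, hm⟩ := exists_minimal_le_of_wellFoundedLT (fun i => v i ≠ 0) hex.choose hex.choose_spec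
        rw [Finset.sum_eq_single i]
        · rw [if_pos]
          refine ⟨hm.1, fun i' hi' => ?_⟩
          by_contra hc
          exact absurd (hm.2 hc hi'.le) (not_le.2 hi')
        · intro j _ hj
          rw [if_neg]
          rintro ⟨h1, h2⟩
          rcases lt_or_gt_of_ne hj with h | h
          · exact absurd (hm.2 h1 h.le) (not_le.2 h)
          · exact hm.1 (h2 i h)
        · simp
    rw [h1, pow_succ']
    refine Ideal.sum_mem _ (fun i _ => Ideal.mul_mem_mul (X_mem i) (ih _ ?_))
    intro w hw
    rw [hq]
    split_ifs
    · apply hr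
      rw [map_add, Finsupp.degree_single]
      omega
    · rfl

lemma F_to_pow (t : ℕ) : ∃ m, ∀ x : Fin b → PS A n, x ∈ F rk (cfd (LinearMap.id : (Fin b → PS A n) →ₗ[PS A n] _)) m → x ∈ (II A n) ^ t • (⊤ : Submodule (PS A n) (Fin b → PS A n)) := by
  have hf := ix_fin b n t
  refine ⟨hf.toFinset.sup rk + 1, fun x hx => ?_⟩
  have : x = ∑ j, x j • (Pi.single j 1 : Fin b → PS A n) := by
    ext1 k
    simp [Finset.sum_apply, Pi.single_apply]
  rw [this]
  refine Submodule.sum_mem _ (fun j _ => Submodule.smul_mem_smul (coeff_mem_pow t _ ?_) trivial)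
  intro v hv
  refine hx (j, v) ?_
  have := Finset.le_sup (f := rk) (hf.mem_toFinset.2 (show (j, v) ∈ {w : Ix b n | w.2.degree ≤ t} from hv.le))
  omega

lemma smul_top_apply {R : Type} [CommRing R] (J : Ideal R) (x : Fin b → R) (hx : x ∈ J • (⊤ : Submodule R (Fin b → R))) (j : Fin b) : x j ∈ J := by
  induction hx using Submodule.smul_induction_on' with
  | smul r hr y _ => exact J.mul_mem_right _ hr
  | add x _ y _ h1 h2 => exact J.add_mem h1 h2

lemma rk_deg (m : ℕ) : ∃ D, ∀ w : Ix b n, rk w < m → w.2.degree < D := by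
  obtain ⟨D, hD⟩ := ((rk_fin (b := b) (n := n) m).image (fun w => w.2.degree)).bddAbove
  exact ⟨D + 1, fun w hw => Nat.lt_succ_of_le (hD ⟨w, hw, rfl⟩)⟩

lemma pow_to_F (m : ℕ) : ∃ t, ∀ x : Fin b → PS A n, x ∈ (II A n) ^ t • (⊤ : Submodule (PS A n) (Fin b → PS A n)) → x ∈ F rk (cfd (LinearMap.id : (Fin b → PS A n) →ₗ[PS A n] _)) m := by
  obtain ⟨D, hD⟩ := rk_deg (b := b) (n := n) m
  refine ⟨D, fun x hx w hw => ?_⟩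
  rw [cfd_apply]
  refine mem_pow_coeff D _ ?_ _ (hD w hw)
  exact smul_top_apply _ x hx w.1

lemma AR [IsNoetherianRing A] {b c : ℕ} (d : (Fin b → PS A n) →ₗ[PS A n] (Fin c → PS A n)) (m : ℕ) : ∃ m', ∀ x ∈ F rk (cfd d) m',
    x ∈ F rk (cfd (LinearMap.id : (Fin b → PS A n) →ₗ[PS A n] _)) m ⊔ (LinearMap.ker d).restrictScalars A := by
  obtain ⟨t, ht⟩ := pow_to_F (A := A) (n := n) (b := b) m
  obtain ⟨k, hk⟩ := Ideal.exists_pow_inf_eq_pow_smul (II A n) (LinearMap.range d)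
  obtain ⟨m', hm'⟩ := F_to_pow (A := A) (n := n) (b := c) (t + k)
  refine ⟨m', fun x hx => ?_⟩
  have h1 : d x ∈ (II A n) ^ (t+k) • ⊤ ⊓ LinearMap.range d := ⟨hm' _ hx, x, rfl⟩
  rw [hk (t+k) (by omega), Nat.add_sub_cancel] at h1
  have h2 : d x ∈ (II A n) ^ t • LinearMap.range d := Submodule.smul_mono le_rfl inf_le_right h1
  rw [LinearMap.range_eq_map, ← Submodule.map_smul''] at h2
  obtain ⟨y, hy, hyx⟩ := h2
  rw [Submodule.mem_sup]
  refine ⟨y, ht y hy, x - y, ?_, by abel⟩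
  rw [Submodule.restrictScalars_mem, LinearMap.mem_ker, map_sub, hyx, sub_self]
end LC
end
end

section
noncomputable section
namespace LC
open scoped TensorProduct
variable {A : Type} [CommRing A] {n : ℕ}
variable {E : Type} [AddCommGroup E] [Module (PS A n) E] [Module A E] [IsScalarTower A (PS A n) E]
  (κ : E →+ (Sg n →₀ A)) (hκ : Function.Bijective κ) (hC : ∀ (a : A) (e : E), κ ((MvPowerSeries.C a : PS A n) • e) = a • κ e)
  (hρ : ∀ (r : PS A n) (e : E), κ (r • e) 0 = (κ e).sum (fun v a => a * MvPowerSeries.coeff v r))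

def rh : E →ₗ[A] A where
  toFun e := κ e 0
  map_add' x y := by rw [map_add]; rfl
  map_smul' a e := by
    rw [← algebraMap_smul (PS A n) a e]
    exact DFunLike.congr_fun (hC a e) 0

abbrev RH {N : Type} [AddCommGroup N] [Module (PS A n) N] [Module A N] [IsScalarTower A (PS A n) N] (φ : N →ₗ[PS A n] E) : N →ₗ[A] A :=
  rh κ hC ∘ₗ φ.restrictScalars A

include hρ in
lemma kap (e : E) (v : Sg n) : κ e v = κ ((MvPowerSeries.monomial v 1 : PS A n) • e) 0 := by
  classical
  rw [hρ, Finsupp.sum_eq_single v]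
  · simp
  · intro w _ hw
    rw [MvPowerSeries.coeff_monomial_ne hw, mul_zero]
  · simp

include hκ hρ in
lemma RH_inj {N : Type} [AddCommGroup N] [Module (PS A n) N] [Module A N] [IsScalarTower A (PS A n) N] (φ ψ : N →ₗ[PS A n] E)
    (h : RH κ hC φ = RH κ hC ψ) : φ = ψ := by
  ext x
  apply hκ.1
  ext v
  rw [kap κ hρ (φ x) v, kap κ hρ (ψ x) v, ← map_smul, ← map_smul]
  exact LinearMap.congr_fun h _

variable {N : Type} [AddCommGroup N] [Module (PS A n) N] [Module A N] [IsScalarTower A (PS A n) N] {b c : ℕ}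

include hρ in
lemma RH_span (d : N →ₗ[PS A n] (Fin b → PS A n)) (ψ : (Fin b → PS A n) →ₗ[PS A n] E) :
    RH κ hC (ψ ∘ₗ d) ∈ Submodule.span A (Set.range (cfd d)) := by
  have : RH κ hC (ψ ∘ₗ d) = ∑ j : Fin b, ∑ v ∈ (κ (ψ (Pi.single j 1))).support, (κ (ψ (Pi.single j 1)) v) • cfd d (j, v) := by
    ext x
    rw [LinearMap.sum_apply]
    have h1 : d x = ∑ j, d x j • (Pi.single j 1 : Fin b → PS A n) := by
      ext1 k
      simp [Finset.sum_apply, Pi.single_apply]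
    change κ (ψ (d x)) 0 = _
    rw [h1, map_sum, map_sum, Finsupp.finsetSum_apply]
    apply Finset.sum_congr rfl
    intro j _
    rw [LinearMap.sum_apply, map_smul, hρ]
    apply Finset.sum_congr rfl
    intro v _
    rfl
  rw [this]
  exact Submodule.sum_mem _ fun j _ => Submodule.sum_mem _ fun v _ => Submodule.smul_mem _ _ (Submodule.subset_span ⟨_, rfl⟩)

lemma cfd_e (j : Fin b) (v : Sg n) (w : Ix b n) : cfd (LinearMap.id : (Fin b → PS A n) →ₗ[PS A n] _) w
    (MvPowerSeries.monomial v (1 : A) • (Pi.single j 1 : Fin b → PS A n)) = if w = (j, v) then 1 else 0 := by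
  classical
  rw [cfd_apply, LinearMap.id_apply, Pi.smul_apply]
  by_cases h : w.1 = j
  · subst h
    rw [Pi.single_eq_same, smul_eq_mul, mul_one, MvPowerSeries.coeff_monomial]
    congr 1
    rw [eq_iff_iff, Prod.ext_iff]
    simp
  · rw [Pi.single_eq_of_ne h, smul_zero, map_zero, if_neg]
    rintro rfl
    exact h rfl

include hκ hρ in
lemma RH_surj [IsDomain A] (l : (Fin b → PS A n) →ₗ[A] A) (hl : ∃ m, ∀ x ∈ F rk (cfd (LinearMap.id : (Fin b → PS A n) →ₗ[PS A n] _)) m, l x = 0) :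
    ∃ φ : (Fin b → PS A n) →ₗ[PS A n] E, RH κ hC φ = l := by
  obtain ⟨m, hm⟩ := hl
  let B : Ix b n → (Fin b → PS A n) := fun w => MvPowerSeries.monomial w.2 (1 : A) • (Pi.single w.1 1 : Fin b → PS A n)
  have hB : ∀ w w', cfd (LinearMap.id : (Fin b → PS A n) →ₗ[PS A n] _) w' (B w) = if w' = w then 1 else 0 := fun w w' => cfd_e w.1 w.2 w'
  have hBF : ∀ w, B w ∈ F rk (cfd (LinearMap.id : (Fin b → PS A n) →ₗ[PS A n] _)) (rk w) := by
    intro w w' hw'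
    rw [hB, if_neg]
    rintro rfl
    omega
  have hfin : ∀ j : Fin b, {v : Sg n | l (B (j, v)) ≠ 0}.Finite := by
    intro j
    refine Set.Finite.subset ((rk_fin (b := b) (n := n) m).preimage (f := fun v => (j, v)) (fun a _ b _ h => (Prod.ext_iff.1 h).2)) ?_
    intro v hv
    by_contra hc
    apply hv
    apply hm
    intro w hw
    refine hBF (j, v) w ?_
    have : ¬ rk (j, v) < m := hc
    omega
  choose e he using fun j : Fin b => hκ.2 (Finsupp.ofSupportFinite (fun v => l (B (j, v))) (hfin j))
  let φ : (Fin b → PS A n) →ₗ[PS A n] E := Fintype.linearCombination (PS A n) e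
  have hφ : ∀ w, RH κ hC φ (B w) = l (B w) := by
    intro w
    change κ (φ (B w)) 0 = _
    have h1 : φ (Pi.single w.1 1) = e w.1 := by
      simp [φ, Fintype.linearCombination_apply, Pi.single_apply]
    rw [show φ (B w) = MvPowerSeries.monomial w.2 (1 : A) • φ (Pi.single w.1 1) from map_smul _ _ _, h1, ← kap κ hρ, he]
    rfl
  refine ⟨φ, ?_⟩
  obtain ⟨m', hm'⟩ := span_cont (rk := rk) _ (RH_span κ hC hρ LinearMap.id φ)
  have hm2 : ∀ x ∈ F rk (cfd (LinearMap.id : (Fin b → PS A n) →ₗ[PS A n] _)) m', RH κ hC φ x = 0 := hm'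
  rw [← sub_eq_zero]
  refine LinearMap.ext fun x => ?_
  refine red (cfd (LinearMap.id : (Fin b → PS A n) →ₗ[PS A n] _)) rk_inj (V := ⊤) (one_ne_zero (α := A)) B (fun u _ => hBF u) (fun _ _ => trivial) (fun u _ => by rw [hB, if_pos rfl])
    (RH κ hC φ - l) (max m m') ?_ ?_ x trivial
  · intro x _ hx
    rw [LinearMap.sub_apply, hm2 x (fun w hw => hx w (lt_max_of_lt_right hw)), hm x (fun w hw => hx w (lt_max_of_lt_left hw)), sub_zero]
  · intro u _
    rw [LinearMap.sub_apply, hφ, sub_self]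

include hκ hC hρ in
lemma im_iff [IsDomain A] (d : (Fin b → PS A n) →ₗ[PS A n] (Fin c → PS A n)) (φ : (Fin b → PS A n) →ₗ[PS A n] E) :
    RH κ hC φ ∈ Submodule.span A (Set.range (cfd d)) ↔ ∃ ψ : (Fin c → PS A n) →ₗ[PS A n] E, φ = ψ ∘ₗ d := by
  constructor
  · intro h
    have key : ∀ l ∈ Submodule.span A (Set.range (cfd d)), ∃ ψ : (Fin c → PS A n) →ₗ[PS A n] E, RH κ hC (ψ ∘ₗ d) = l := by
      intro l hl
      induction hl using Submodule.span_induction with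
      | mem x h =>
        obtain ⟨w, rfl⟩ := h
        obtain ⟨ψ, hψ⟩ := RH_surj κ hκ hC hρ (cfd (LinearMap.id : (Fin c → PS A n) →ₗ[PS A n] _) w) ⟨rk w + 1, fun x hx => hx w (Nat.lt_succ_self _)⟩
        refine ⟨ψ, ?_⟩
        refine LinearMap.ext fun x => ?_
        exact LinearMap.congr_fun hψ (d x)
      | zero => exact ⟨0, by refine LinearMap.ext fun x => ?_; simp⟩
      | add a b _ _ ha hb =>
        obtain ⟨ψ, h1⟩ := ha
        obtain ⟨ψ', h2⟩ := hb
        refine ⟨ψ + ψ', ?_⟩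
        rw [← h1, ← h2]
        refine LinearMap.ext fun x => ?_
        simp
      | smul a b _ hb =>
        obtain ⟨ψ, h1⟩ := hb
        refine ⟨(MvPowerSeries.C a : PS A n) • ψ, ?_⟩
        rw [← h1]
        refine LinearMap.ext fun x => ?_
        exact DFunLike.congr_fun (hC a (ψ (d x))) 0
    obtain ⟨ψ, hψ⟩ := key _ h
    exact ⟨ψ, RH_inj κ hκ hC hρ _ _ hψ.symm⟩
  · rintro ⟨ψ, rfl⟩
    exact RH_span κ hC hρ d ψ

include hκ hC hρ in
theorem C_main0 [IsDomain A] [IsNoetherianRing A] {a : ℕ} (d1 : (Fin a → PS A n) →ₗ[PS A n] (Fin b → PS A n))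
    (d2 : (Fin b → PS A n) →ₗ[PS A n] (Fin c → PS A n)) (hd : d2 ∘ₗ d1 = 0) :
    ∃ g : A, g ≠ 0 ∧ ∀ g', g' ≠ 0 → g ∣ g' → ∀ (H X : Type) [AddCommGroup H] [Module (PS A n) H] [Module A H] [IsScalarTower A (PS A n) H]
      [AddCommGroup X] [Module (PS A n) X] (p : ((Fin b → PS A n) →ₗ[PS A n] E) →ₗ[PS A n] X) (j : H →ₗ[PS A n] X),
      Function.Injective j → (∀ h, ∃ φ, p φ = j h) → (∀ φ, φ ∘ₗ d1 = 0 ↔ ∃ h, j h = p φ) → (∀ φ, p φ = 0 ↔ ∃ ψ, φ = ψ ∘ₗ d2) →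
      Module.Free (Localization.Away g') (Localization.Away g' ⊗[A] H) := by
  obtain ⟨g1, hg1, G1⟩ := GG_exists (A := A) (n := n) (LinearMap.id : (Fin b → PS A n) →ₗ[PS A n] _) (LinearMap.range d1)
  obtain ⟨g2, hg2, G2⟩ := GG_exists (A := A) (n := n) (LinearMap.id : (Fin b → PS A n) →ₗ[PS A n] _) (LinearMap.ker d2)
  obtain ⟨g3, hg3, G3⟩ := GG_exists (A := A) (n := n) d2 ⊤
  refine ⟨g1 * g2 * g3, mul_ne_zero (mul_ne_zero hg1 hg2) hg3, ?_⟩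
  rintro g' hg' ⟨q, rfl⟩ H X _ _ _ _ _ _ p j hj hp hK h0
  have hKiff : ∀ φ : (Fin b → PS A n) →ₗ[PS A n] E, (∀ x ∈ (LinearMap.range d1).restrictScalars A, RH κ hC φ x = 0) → φ ∘ₗ d1 = 0 := by
    intro φ h
    apply RH_inj κ hκ hC hρ
    refine LinearMap.ext fun x => ?_
    exact (h (d1 x) ⟨x, rfl⟩).trans (map_zero (rh κ hC)).symm
  have hex : ∀ l : KK rk (cfd (LinearMap.id : (Fin b → PS A n) →ₗ[PS A n] _)) ((LinearMap.range d1).restrictScalars A),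
      ∃ h : H, ∃ φ, RH κ hC φ = l.1 ∧ j h = p φ := by
    rintro ⟨l, hl1, hl2⟩
    obtain ⟨φ, rfl⟩ := RH_surj κ hκ hC hρ l hl1
    obtain ⟨h, hh⟩ := (hK φ).1 (hKiff φ hl2)
    exact ⟨h, φ, rfl, hh⟩
  choose P Φ hΦ hP using hex
  let π : KK rk (cfd (LinearMap.id : (Fin b → PS A n) →ₗ[PS A n] _)) ((LinearMap.range d1).restrictScalars A) →ₗ[A] H :=
    { toFun := P
      map_add' := by
        intro x y
        apply hj
        rw [map_add, hP, hP, hP, ← map_add]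
        congr 1
        apply RH_inj κ hκ hC hρ
        rw [hΦ]
        refine LinearMap.ext fun z => ?_
        change (x.1 + y.1) z = κ (Φ x z + Φ y z) 0
        rw [← hΦ, ← hΦ, map_add]
        rfl
      map_smul' := by
        intro a x
        apply hj
        rw [RingHom.id_apply, ← algebraMap_smul (PS A n) a (P x), map_smul, hP, hP, ← map_smul]
        congr 1
        apply RH_inj κ hκ hC hρ
        rw [hΦ]
        refine LinearMap.ext fun z => ?_
        refine Eq.trans ?_ (DFunLike.congr_fun (hC a (Φ x z)) 0).symm
        change (a • x.1) z = a • (RH κ hC (Φ x) z)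
        rw [hΦ]
        rfl }
  have hπ : ∀ x, π x = P x := fun _ => rfl
  refine C_abs (cfd (LinearMap.id : (Fin b → PS A n) →ₗ[PS A n] _)) rk_inj rk_inj (cfd d2) _ ((LinearMap.ker d2).restrictScalars A) ?_ ?_ (AR d2)
    _ hg' ?_ ?_ ?_ π ?_ ?_
  · rintro _ ⟨x, rfl⟩
    exact LinearMap.congr_fun hd x
  · intro x hx w
    rw [cfd_apply, show d2 x = 0 from hx]
    simp
  · rw [show g1 * g2 * g3 * q = (g2 * g3 * q) * g1 by ring]; exact G1.mul _ _ _
  · rw [show g1 * g2 * g3 * q = (g1 * g3 * q) * g2 by ring]; exact G2.mul _ _ _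
  · rw [show g1 * g2 * g3 * q = (g1 * g2 * q) * g3 by ring]; exact G3.mul _ _ _
  · intro h
    obtain ⟨φ, hφ⟩ := hp h
    have hφ0 := (hK φ).2 ⟨h, hφ.symm⟩
    have hmem : RH κ hC φ ∈ KK rk (cfd (LinearMap.id : (Fin b → PS A n) →ₗ[PS A n] _)) ((LinearMap.range d1).restrictScalars A) := by
      refine ⟨span_cont (rk := rk) _ (RH_span κ hC hρ LinearMap.id φ), ?_⟩
      rintro _ ⟨x, rfl⟩
      have := LinearMap.congr_fun hφ0 x
      change κ (φ (d1 x)) 0 = 0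
      rw [show φ (d1 x) = 0 from this]
      exact congrArg (fun f : Sg n →₀ A => f 0) (map_zero κ)
    refine ⟨⟨_, hmem⟩, ?_⟩
    rw [hπ]
    apply hj
    rw [hP, ← hφ]
    congr 1
    apply RH_inj κ hκ hC hρ
    rw [hΦ]
  · intro x
    rw [hπ, ← hΦ, im_iff κ hκ hC hρ, ← h0, ← hP]
    exact ⟨fun h => by rw [h, map_zero], fun h => hj (by rw [h, map_zero])⟩
end LC
end
end

section
noncomputable section
namespace LC
attribute [local irreducible] H Hmap hε T
section D1
variable {R : Type} [CommRing R] (I : Ideal R) (i : ℕ)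
variable {N N' : Type} [AddCommGroup N] [Module R N] [AddCommGroup N'] [Module R N']

def Hlin : (N →ₗ[R] N') →ₗ[R] (H I i N →ₗ[R] H I i N') where
  toFun f := Hmap I i f
  map_add' f g := Hmap_add I i f g
  map_smul' r f := Hmap_smul I i r f

variable {k l m : ℕ}

def dot (x : Fin k → R) : (Fin k → R) →ₗ[R] R := Fintype.linearCombination R x

lemma dot_apply (x y : Fin k → R) : dot x y = ∑ j, y j * x j := Fintype.linearCombination_apply ..

lemma dot_single (x : Fin k → R) (j : Fin k) : dot x (Pi.single j 1) = x j := by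
  rw [dot_apply, Finset.sum_eq_single j]
  · simp
  · intro b _ hb; rw [Pi.single_eq_of_ne hb, zero_mul]
  · simp

lemma dot_add (x y : Fin k → R) : dot (x + y) = dot x + dot y := by
  refine LinearMap.ext fun z => ?_
  rw [LinearMap.add_apply, dot_apply, dot_apply, dot_apply, ← Finset.sum_add_distrib]
  exact Finset.sum_congr rfl fun j _ => by rw [Pi.add_apply, mul_add]

lemma dot_smul (r : R) (x : Fin k → R) : dot (r • x) = r • dot x := by
  refine LinearMap.ext fun z => ?_
  rw [LinearMap.smul_apply, dot_apply, dot_apply, Finset.smul_sum]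
  exact Finset.sum_congr rfl fun j _ => by rw [Pi.smul_apply, smul_eq_mul, smul_eq_mul]; ring

lemma dot_inj (x y : Fin k → R) (h : dot x = dot y) : x = y := by
  funext j
  rw [← dot_single x j, h, dot_single]

lemma lin_ext {f g : (Fin k → R) →ₗ[R] N} (h : ∀ j, f (Pi.single j 1) = g (Pi.single j 1)) : f = g := by
  refine (Pi.basisFun R (Fin k)).ext fun j => ?_
  rw [Pi.basisFun_apply]
  exact h j

def tr (d : (Fin k → R) →ₗ[R] (Fin l → R)) : (Fin l → R) →ₗ[R] (Fin k → R) :=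
  LinearMap.pi fun j => dot (d (Pi.single j 1))

lemma dot_tr (d : (Fin k → R) →ₗ[R] (Fin l → R)) (x : Fin l → R) : dot x ∘ₗ d = dot (tr d x) := by
  refine lin_ext fun j => ?_
  rw [dot_single, LinearMap.comp_apply]
  change dot x (d _) = dot (d _) x
  rw [dot_apply, dot_apply]
  exact Finset.sum_congr rfl fun j _ => mul_comm _ _

lemma tr_comp (d : (Fin k → R) →ₗ[R] (Fin l → R)) (d' : (Fin l → R) →ₗ[R] (Fin m → R)) : tr (d' ∘ₗ d) = tr d ∘ₗ tr d' := by
  refine LinearMap.ext fun x => dot_inj _ _ ?_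
  rw [← dot_tr, LinearMap.comp_apply, ← dot_tr, ← dot_tr, LinearMap.comp_assoc]

lemma tr_zero : tr (0 : (Fin k → R) →ₗ[R] (Fin l → R)) = 0 := by
  refine LinearMap.ext fun x => dot_inj _ _ ?_
  rw [← dot_tr, LinearMap.comp_zero, LinearMap.zero_apply]
  refine LinearMap.ext fun z => ?_
  rw [dot_apply]
  simp

variable {E : Type} [AddCommGroup E] [Module R E] (e : H I i R ≃ₗ[R] E)

def Psi (k : ℕ) : H I i (Fin k → R) →ₗ[R] ((Fin k → R) →ₗ[R] E) :=
  LinearMap.mk₂ R (fun t x => e (Hlin I i (dot x) t))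
    (fun t t' x => by rw [map_add, map_add]) (fun r t x => by rw [map_smul, map_smul])
    (fun t x y => by rw [dot_add, map_add, LinearMap.add_apply, map_add])
    (fun r t x => by rw [dot_smul, map_smul, LinearMap.smul_apply, map_smul])

lemma Psi_apply (t : H I i (Fin k → R)) (x) : Psi I i e k t x = e (Hmap I i (dot x) t) := rfl

lemma Psi_nat (d : (Fin k → R) →ₗ[R] (Fin l → R)) (t : H I i (Fin k → R)) :
    Psi I i e l (Hmap I i d t) = Psi I i e k t ∘ₗ tr d := by
  refine LinearMap.ext fun x => ?_
  rw [LinearMap.comp_apply, Psi_apply, Psi_apply, ← dot_tr, Hmap_comp, LinearMap.comp_apply]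

def sg (j : Fin k) : R →ₗ[R] (Fin k → R) := LinearMap.single R (fun _ => R) j

lemma sg_one (j : Fin k) : sg j (1 : R) = Pi.single j 1 := rfl

lemma id_eq : (LinearMap.id : (Fin k → R) →ₗ[R] (Fin k → R)) = ∑ j : Fin k, sg j ∘ₗ dot (Pi.single j 1) := by
  refine lin_ext fun j => ?_
  rw [LinearMap.sum_apply, Finset.sum_eq_single j]
  · rw [LinearMap.comp_apply, dot_single, Pi.single_eq_same, sg_one]; rfl
  · intro b _ hb
    rw [LinearMap.comp_apply, dot_single, Pi.single_eq_of_ne hb.symm, map_zero]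
  · simp

lemma H_decomp (t : H I i (Fin k → R)) : t = ∑ j : Fin k, Hmap I i (sg j) (Hmap I i (dot (Pi.single j 1)) t) := by
  have h1 : Hlin I i (LinearMap.id : (Fin k → R) →ₗ[R] (Fin k → R)) t = t :=
    (LinearMap.congr_fun (Hmap_id I i) t)
  conv_lhs => rw [← h1, id_eq, map_sum, LinearMap.sum_apply]
  refine Finset.sum_congr rfl fun j _ => ?_
  exact LinearMap.congr_fun (Hmap_comp I i _ _) t

lemma Psi_bij (k : ℕ) : Function.Bijective (Psi I i e k) := by
  constructor
  · rw [injective_iff_map_eq_zero]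
    intro t ht
    rw [H_decomp I i t]
    refine Finset.sum_eq_zero fun j _ => ?_
    have : e (Hmap I i (dot (Pi.single j 1)) t) = 0 := LinearMap.congr_fun ht _
    rw [(LinearEquiv.map_eq_zero_iff e).1 this, map_zero]
  · intro φ
    refine ⟨∑ j, Hmap I i (sg j) (e.symm (φ (Pi.single j 1))), ?_⟩
    refine lin_ext fun j => ?_
    rw [Psi_apply, map_sum, map_sum, Finset.sum_eq_single j]
    · rw [← LinearMap.comp_apply, ← Hmap_comp]
      have : dot (Pi.single j 1) ∘ₗ sg j = (LinearMap.id : R →ₗ[R] R) := by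
        refine LinearMap.ext_ring ?_
        rw [LinearMap.comp_apply, sg_one, dot_single, Pi.single_eq_same]; rfl
      rw [this, Hmap_id, LinearMap.id_apply, LinearEquiv.apply_symm_apply]
    · intro b _ hb
      rw [← LinearMap.comp_apply, ← Hmap_comp]
      have : dot (Pi.single j 1) ∘ₗ sg b = (0 : R) • (LinearMap.id : R →ₗ[R] R) := by
        refine LinearMap.ext_ring ?_
        rw [LinearMap.comp_apply, sg_one, dot_single, Pi.single_eq_of_ne hb, zero_smul]; rfl
      rw [this, Hmap_smul, zero_smul, LinearMap.zero_apply, map_zero]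
    · simp

lemma Hfree_zero (h : Subsingleton (H I i R)) (k : ℕ) : Subsingleton (H I i (Fin k → R)) := by
  refine subsingleton_of_forall_eq 0 fun t => ?_
  rw [H_decomp I i t]
  refine Finset.sum_eq_zero fun j _ => ?_
  rw [Subsingleton.elim (Hmap I i (dot (Pi.single j 1)) t) 0, map_zero]
end D1
end LC
end
end

section
noncomputable section
namespace LC
attribute [local irreducible] H Hmap hε T
open scoped TensorProduct
section
variable {R : Type} [CommRing R] (I : Ideal R)
variable {N N' N'' : Type} [AddCommGroup N] [Module R N] [AddCommGroup N'] [Module R N']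
  [AddCommGroup N''] [Module R N'']
theorem H_les_m (i m : ℕ) (hm : m = i + 1) {f : N →ₗ[R] N'} {g : N' →ₗ[R] N''} (hf : Function.Injective f) (h : Function.Exact f g)
    (hg : Function.Surjective g) : ∃ δ : H I i N'' →ₗ[R] H I m N,
      Function.Exact (Hmap I i f) (Hmap I i g) ∧ Function.Exact (Hmap I i g) δ ∧ Function.Exact δ (Hmap I m f) := by
  subst hm
  exact H_les I i hf h hg
end
section D2
variable {A : Type} [CommRing A] [IsDomain A] [IsNoetherianRing A] {n : ℕ}

def Good (A : Type) [CommRing A] (n i : ℕ) (M : Type) [AddCommGroup M] [Module (PS A n) M] : Prop :=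
  ∃ g : A, g ≠ 0 ∧ ∀ g', g' ≠ 0 → g ∣ g' → ∀ (Y : Type) [AddCommGroup Y] [Module (PS A n) Y] [Module A Y] [IsScalarTower A (PS A n) Y],
    (Y ≃ₗ[PS A n] H (II A n) i M) → Module.Free (Localization.Away g') (Localization.Away g' ⊗[A] Y)

variable {N N' N'' : Type} [AddCommGroup N] [Module (PS A n) N] [AddCommGroup N'] [Module (PS A n) N'] [AddCommGroup N''] [Module (PS A n) N'']

omit [IsDomain A] in
lemma H_big (i : ℕ) (hi : n < i) (N : Type) [AddCommGroup N] [Module (PS A n) N] : Subsingleton (H (II A n) i N) := by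
  refine H_dim (R := PS A n) (MvPowerSeries.X) n le_rfl N (fun j hj => ?_) i hi
  exact absurd j.2 (by omega)

omit [IsDomain A] in
lemma Htop_surj (f : N →ₗ[PS A n] N') (hf : Function.Surjective f) : Function.Surjective (Hmap (II A n) n f) := by
  obtain ⟨δ, e2, e3, e1⟩ := H_les (II A n) n (f := (LinearMap.ker f).subtype) (g := f) (Submodule.subtype_injective _)
    (LinearMap.exact_subtype_ker_map f) hf
  have := H_big (A := A) (n + 1) (Nat.lt_succ_self n) (LinearMap.ker f)
  intro y
  exact (e3 y).1 (Subsingleton.elim _ _)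

omit [IsDomain A] in
lemma Htop_exact (f : N →ₗ[PS A n] N') (g : N' →ₗ[PS A n] N'') (h : Function.Exact f g) (hg : Function.Surjective g) :
    Function.Exact (Hmap (II A n) n f) (Hmap (II A n) n g) := by
  obtain ⟨δ, e2, e3, e1⟩ := H_les (II A n) n (f := (LinearMap.ker g).subtype) (g := g) (Submodule.subtype_injective _)
    (LinearMap.exact_subtype_ker_map g) hg
  have hfk : ∀ x, f x ∈ LinearMap.ker g := fun x => h.apply_apply_eq_zero x
  have hs : Function.Surjective (f.codRestrict (LinearMap.ker g) hfk) := by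
    rintro ⟨y, hy⟩
    obtain ⟨x, rfl⟩ := (h y).1 hy
    exact ⟨x, rfl⟩
  have hs' := Htop_surj _ hs
  have hc : f = (LinearMap.ker g).subtype ∘ₗ (f.codRestrict (LinearMap.ker g) hfk) := rfl
  intro y
  rw [e2 y, hc, Hmap_comp]
  constructor
  · rintro ⟨z, rfl⟩
    obtain ⟨w, rfl⟩ := hs' z
    exact ⟨w, rfl⟩
  · rintro ⟨w, rfl⟩
    exact ⟨_, rfl⟩

omit [IsDomain A] [IsNoetherianRing A] in
lemma Good_of_zero (i : ℕ) [Nontrivial A] (h : Subsingleton (H (II A n) i N)) : Good A n i N := by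
  refine ⟨1, one_ne_zero, ?_⟩
  intro g' _ _ Y _ _ _ _ e
  have : Subsingleton Y := e.toEquiv.subsingleton
  infer_instance

omit [IsDomain A] [IsNoetherianRing A] in
lemma Good_congr {i i' : ℕ} (e : H (II A n) i N ≃ₗ[PS A n] H (II A n) i' N') (h : Good A n i' N') : Good A n i N := by
  obtain ⟨g, hg, h⟩ := h
  exact ⟨g, hg, fun g' h1 h2 Y _ _ _ _ e' => h g' h1 h2 Y (e'.trans e)⟩

lemma Good_step (i : ℕ) (hi : i + 1 < n) [Module.Finite (PS A n) N]
    (h : ∀ (K : Type) [AddCommGroup K] [Module (PS A n) K] [Module.Finite (PS A n) K], Good A n (i+1) K) : Good A n i N := by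
  obtain ⟨b, f, hf⟩ := Module.Finite.exists_fin' (PS A n) N
  obtain ⟨δ, e2, e3, e1⟩ := H_les (II A n) i (f := (LinearMap.ker f).subtype) (g := f) (Submodule.subtype_injective _)
    (LinearMap.exact_subtype_ker_map f) hf
  have h1 := Hfree_zero (II A n) i (HR_zero i (by omega)) b
  have h2 := Hfree_zero (II A n) (i+1) (HR_zero (i+1) hi) b
  refine Good_congr (LinearEquiv.ofBijective δ ⟨?_, ?_⟩) (h (LinearMap.ker f))
  · rw [injective_iff_map_eq_zero]
    intro x hx
    obtain ⟨y, rfl⟩ := (e3 x).1 hx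
    rw [Subsingleton.elim y 0, map_zero]
  · intro y
    exact (e1 y).1 (Subsingleton.elim _ _)

variable {E : Type} [AddCommGroup E] [Module (PS A n) E] [Module A E] [IsScalarTower A (PS A n) E]
  (κ : E →+ (Sg n →₀ A)) (hκ : Function.Bijective κ) (hC : ∀ (a : A) (e : E), κ ((MvPowerSeries.C a : PS A n) • e) = a • κ e)
  (hρ : ∀ (r : PS A n) (e : E), κ (r • e) 0 = (κ e).sum (fun v a => a * MvPowerSeries.coeff v r))
  (e : H (II A n) n (PS A n) ≃ₗ[PS A n] E)

abbrev Pe (b : ℕ) : H (II A n) n (Fin b → PS A n) ≃ₗ[PS A n] ((Fin b → PS A n) →ₗ[PS A n] E) :=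
  LinearEquiv.ofBijective (Psi (II A n) n e b) (Psi_bij (II A n) n e b)

omit [IsDomain A] [IsNoetherianRing A] [Module A E] [IsScalarTower A (PS A n) E] in
lemma Pe_nat {b c : ℕ} (d : (Fin b → PS A n) →ₗ[PS A n] (Fin c → PS A n)) (φ) :
    Pe e c (Hmap (II A n) n d ((Pe e b).symm φ)) = φ ∘ₗ tr d := by
  refine (Psi_nat (II A n) n e d _).trans ?_
  exact congrArg (fun φ => φ ∘ₗ tr d) ((Pe e b).apply_symm_apply φ)

omit [IsDomain A] [Module A E] [IsScalarTower A (PS A n) E] in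
lemma p_ker {b c : ℕ} (d : (Fin c → PS A n) →ₗ[PS A n] (Fin b → PS A n)) (f : (Fin b → PS A n) →ₗ[PS A n] N)
    (h : Function.Exact d f) (hf : Function.Surjective f) (φ) :
    Hmap (II A n) n f ((Pe e b).symm φ) = 0 ↔ ∃ ψ, φ = ψ ∘ₗ tr d := by
  rw [Htop_exact d f h hf]
  constructor
  · rintro ⟨t, ht⟩
    refine ⟨Pe e c t, ?_⟩
    rw [← Pe_nat, LinearEquiv.symm_apply_apply, ht, LinearEquiv.apply_symm_apply]
  · rintro ⟨ψ, rfl⟩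
    exact ⟨(Pe e c).symm ψ, by rw [← Pe_nat, LinearEquiv.symm_apply_apply]⟩

include κ hκ hC hρ e in
lemma Good_top [Module.Finite (PS A n) N] : Good A n n N := by
  obtain ⟨b, f, hf⟩ := Module.Finite.exists_fin' (PS A n) N
  obtain ⟨c, f1, hf1⟩ := Module.Finite.exists_fin' (PS A n) (LinearMap.ker f)
  have hex : Function.Exact ((LinearMap.ker f).subtype ∘ₗ f1) f := by
    intro y
    constructor
    · intro hy
      obtain ⟨x, hx⟩ := hf1 ⟨y, hy⟩
      exact ⟨x, congrArg Subtype.val hx⟩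
    · rintro ⟨x, rfl⟩
      exact (f1 x).2
  obtain ⟨g, hg, hmain⟩ := C_main0 κ hκ hC hρ (0 : (Fin 0 → PS A n) →ₗ[PS A n] (Fin b → PS A n)) (tr ((LinearMap.ker f).subtype ∘ₗ f1)) (LinearMap.comp_zero _)
  refine ⟨g, hg, ?_⟩
  intro g' h1 h2 Y _ _ _ _ e'
  have hs := Htop_surj f hf
  refine hmain g' h1 h2 Y (H (II A n) n N) (Hmap (II A n) n f ∘ₗ ((Pe e b).symm : _ →ₗ[PS A n] _)) (e' : Y →ₗ[PS A n] _) e'.injective ?_ ?_ ?_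
  · intro h
    obtain ⟨t, ht⟩ := hs (e' h)
    refine ⟨Pe e b t, ?_⟩
    refine Eq.trans ?_ ht
    exact congrArg (Hmap (II A n) n f) ((Pe e b).symm_apply_apply t)
  · intro φ
    refine ⟨fun _ => ⟨e'.symm _, e'.apply_symm_apply _⟩, fun _ => LinearMap.comp_zero _⟩
  · intro φ
    exact p_ker e _ f hex hf φ

include κ hκ hC hρ e in
lemma Good_sub (i : ℕ) (hi : i + 1 = n) [Module.Finite (PS A n) N] : Good A n i N := by
  obtain ⟨a, f, hf⟩ := Module.Finite.exists_fin' (PS A n) N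
  obtain ⟨b, f1, hf1⟩ := Module.Finite.exists_fin' (PS A n) (LinearMap.ker f)
  obtain ⟨c, f2, hf2⟩ := Module.Finite.exists_fin' (PS A n) (LinearMap.ker f1)
  have hex : Function.Exact ((LinearMap.ker f1).subtype ∘ₗ f2) f1 := by
    intro y
    constructor
    · intro hy
      obtain ⟨x, hx⟩ := hf2 ⟨y, hy⟩
      exact ⟨x, congrArg Subtype.val hx⟩
    · rintro ⟨x, rfl⟩
      exact (f2 x).2
  have hd : tr ((LinearMap.ker f1).subtype ∘ₗ f2) ∘ₗ tr ((LinearMap.ker f).subtype ∘ₗ f1) = 0 := by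
    rw [← tr_comp, ← tr_zero]
    congr 1
    refine LinearMap.ext fun x => ?_
    exact congrArg Subtype.val (hex.apply_apply_eq_zero x)
  obtain ⟨g, hg, hmain⟩ := C_main0 κ hκ hC hρ _ _ hd
  refine ⟨g, hg, ?_⟩
  intro g' h1 h2 Y _ _ _ _ e'
  have hs := Htop_surj f1 hf1
  obtain ⟨δ, e2, e3, e1⟩ := H_les_m (II A n) i n hi.symm (f := (LinearMap.ker f).subtype) (g := f) (Submodule.subtype_injective _)
    (LinearMap.exact_subtype_ker_map f) hf
  have hz := Hfree_zero (II A n) i (HR_zero i (by omega)) a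
  have hδ : Function.Injective δ := by
    rw [injective_iff_map_eq_zero]
    intro x hx
    obtain ⟨y, rfl⟩ := (e3 x).1 hx
    rw [Subsingleton.elim y 0, map_zero]
  refine hmain g' h1 h2 Y (H (II A n) n (LinearMap.ker f)) (Hmap (II A n) n f1 ∘ₗ ((Pe e b).symm : _ →ₗ[PS A n] _)) (δ ∘ₗ (e' : Y →ₗ[PS A n] _)) (hδ.comp e'.injective) ?_ ?_ ?_
  · intro h
    obtain ⟨t, ht⟩ := hs (δ (e' h))
    refine ⟨Pe e b t, ?_⟩
    refine Eq.trans ?_ ht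
    exact congrArg (Hmap (II A n) n f1) ((Pe e b).symm_apply_apply t)
  · intro φ
    rw [← Pe_nat, LinearEquiv.map_eq_zero_iff, Hmap_comp, LinearMap.comp_apply, e1]
    constructor
    · rintro ⟨y, hy⟩
      exact ⟨e'.symm y, (congrArg δ (e'.apply_symm_apply y)).trans hy⟩
    · rintro ⟨h, hh⟩
      exact ⟨_, hh⟩
  · intro φ
    exact p_ker e _ f1 hex hf1 φ

include κ hκ hC hρ e in
lemma Good_le (k : ℕ) : ∀ (i : ℕ), i + k = n → ∀ (N : Type) [AddCommGroup N] [Module (PS A n) N] [Module.Finite (PS A n) N], Good A n i N := by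
  induction k with
  | zero =>
    intro i hi N _ _ _
    obtain rfl : i = n := hi
    exact Good_top κ hκ hC hρ e
  | succ k ih =>
    intro i hi N _ _ _
    rcases Nat.eq_zero_or_pos k with rfl | hk
    · exact Good_sub κ hκ hC hρ e i hi
    · exact Good_step i (by omega) (fun K _ _ _ => ih (i+1) (by omega) K)

include κ hκ hC hρ e in
lemma Good_all (i : ℕ) [Module.Finite (PS A n) N] : Good A n i N := by
  by_cases h : i ≤ n
  · exact Good_le κ hκ hC hρ e (n - i) i (by omega) N
  · exact Good_of_zero i (H_big i (by omega) N)
end D2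

theorem Good_final (A : Type) [CommRing A] [IsDomain A] [IsNoetherianRing A] (n i : ℕ) (N : Type) [AddCommGroup N] [Module (PS A n) N] [Module.Finite (PS A n) N] : Good A n i N := by
  obtain ⟨e⟩ := HR_top (A := A) (n := n)
  letI : Module A (QQ A n n n) := Module.compHom _ (algebraMap A (PS A n))
  haveI : IsScalarTower A (PS A n) (QQ A n n n) := IsScalarTower.of_algebraMap_smul fun _ _ => rfl
  exact Good_all ka ka_bij ka_C rho_smul e i

lemma Good_use {A : Type} [CommRing A] {n : ℕ} (i : ℕ) {N : Type} [AddCommGroup N] [Module (PS A n) N] (g' : A)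
    (h : ∀ (Y : Type) [AddCommGroup Y] [Module (PS A n) Y] [Module A Y] [IsScalarTower A (PS A n) Y],
    (Y ≃ₗ[PS A n] H (II A n) i N) → Module.Free (Localization.Away g') (Localization.Away g' ⊗[A] Y))
    {L : Type} [AddCommGroup L] [Module (PS A n) L] (e : L ≃ₗ[PS A n] H (II A n) i N) :
    Module.Free (Localization.Away g') (Localization.Away g' ⊗[A] (RestrictScalars A (PS A n) L)) :=
  @h (RestrictScalars A (PS A n) L) (inferInstanceAs (AddCommGroup L)) (RestrictScalars.moduleOrig A (PS A n) L)
    (RestrictScalars.module A (PS A n) L) (RestrictScalars.isScalarTower A (PS A n) L) e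
end LC
end
end


/-- **Generic freeness of local cohomology over a power series ring.**
Let `A` be a Noetherian domain, `R = A[[x₁, …, xₙ]]`, `I = (x₁, …, xₙ)`.  For every finitely
generated `R`-module `M` there is a nonzero `g ∈ A` such that for every `i ≥ 0` the local
cohomology module `Hⁱ_I(M) ⊗[A] A_g` is a free `A_g`-module. -/
theorem stmt0 (A : Type) [CommRing A] [IsDomain A] [IsNoetherianRing A] (n : ℕ)
    (M : Type) [AddCommGroup M] [Module (MvPowerSeries (Fin n) A) M]
    [Module.Finite (MvPowerSeries (Fin n) A) M]
    (I : Ideal (MvPowerSeries (Fin n) A))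
    (hI : I = Ideal.span (Set.range (MvPowerSeries.X : Fin n → MvPowerSeries (Fin n) A))) :
    ∃ g : A, g ≠ 0 ∧ ∀ i : ℕ,
      Module.Free (Localization.Away g)
        (TensorProduct A (Localization.Away g)
          (RestrictScalars A (MvPowerSeries (Fin n) A)
            ((localCohomology I i).obj (ModuleCat.of (MvPowerSeries (Fin n) A) M)))) := by
  obtain rfl : I = LC.II A n := hI
  choose g hg h using fun i => LC.Good_final A n i M
  have hp : ∏ i ∈ Finset.range (n + 1), g i ≠ 0 := Finset.prod_ne_zero_iff.2 fun i _ => hg i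
  refine ⟨∏ i ∈ Finset.range (n + 1), g i, hp, ?_⟩
  intro i
  by_cases hi : i ≤ n
  · exact LC.Good_use i _ (h i _ hp (Finset.dvd_prod_of_mem g (Finset.mem_range.2 (by omega)))) (LC.Hiso (LC.II A n) i)
  · have h1 := LC.H_big (A := A) i (by omega : n < i) M
    have : Subsingleton (RestrictScalars A (MvPowerSeries (Fin n) A)
            ((localCohomology (LC.II A n) i).obj (ModuleCat.of (MvPowerSeries (Fin n) A) M))) :=
      (LC.Hiso (LC.II A n) i (N := M)).toEquiv.subsingleton
    infer_instance
end

section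
/- Let A be a domain, let T be a Noetherian A-algebra, and let I ⊆ T be an ideal such that T/I is a finitely generated A-module. Then for every finitely generated T-module M there exists a nonzero g ∈ A such that for every n ≥ 1 the module (M/I^n M) ⊗_A A_g is a free A_g-module. -/
open scoped TensorProduct

namespace GF

lemma free_of_filtration {A : Type} [CommRing A] {Q : Type} [AddCommGroup Q] [Module A Q]
    {J : Type} [Finite J] [LinearOrder J] (v : J → Q)
    (hv : Submodule.span A (Set.range v) = ⊤) (g : A)
    (h : ∀ i, (∀ a : A, a • v i ∈ Submodule.span A (v '' Set.Ioi i) → a = 0) ∨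
      g • v i ∈ Submodule.span A (v '' Set.Ioi i)) :
    Module.Free (Localization.Away g) (Localization.Away g ⊗[A] Q) := by
  classical
  let f : Q →ₗ[A] Localization.Away g ⊗[A] Q := TensorProduct.mk A (Localization.Away g) Q 1
  let G : Type := {i : J // ∀ a : A, a • v i ∈ Submodule.span A (v '' Set.Ioi i) → a = 0}
  have hli : LinearIndependent A (fun i : G => v i.1) := by
    rw [linearIndependent_iff]
    intro l hl
    by_contra hne
    have hs : l.support.Nonempty := Finsupp.support_nonempty_iff.2 hne
    set i := l.support.min' hs with hi
    have him : i ∈ l.support := Finset.min'_mem _ _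
    have : l i = 0 := by
      apply i.2
      rw [Finsupp.linearCombination_apply, Finsupp.sum, ← Finset.add_sum_erase _ _ him] at hl
      rw [eq_neg_of_add_eq_zero_left hl]
      refine Submodule.neg_mem _ (Submodule.sum_mem _ fun j hj => Submodule.smul_mem _ _
        (Submodule.subset_span ⟨j.1, ?_, rfl⟩))
      have h1 : i ≤ j := Finset.min'_le _ _ (Finset.mem_of_mem_erase hj)
      exact lt_of_le_of_ne h1 fun e => Finset.ne_of_mem_erase hj (Subtype.ext e.symm)
    exact (Finsupp.mem_support_iff.1 him) this
  have hli2 : LinearIndependent (Localization.Away g) (fun i : G => f (v i.1)) :=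
    LinearIndependent.of_isLocalizedModule (Localization.Away g) (Submonoid.powers g) f hli
  set W := Submodule.span (Localization.Away g) (Set.range (fun i : G => f (v i.1))) with hW
  have hmem : ∀ i : J, f (v i) ∈ W := by
    intro i
    induction i using (Finite.to_wellFoundedGT (α := J)).induction with
    | ind i ih =>
    rcases h i with h1 | h1
    · exact Submodule.subset_span ⟨⟨i, h1⟩, rfl⟩
    · have h2 : Submodule.span A (v '' Set.Ioi i) ≤ (W.restrictScalars A).comap f := by
        rw [Submodule.span_le]
        rintro _ ⟨j, hj, rfl⟩
        exact ih j hj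
      have h3 : f (g • v i) ∈ W := h2 h1
      have h4 : f (g • v i) = algebraMap A (Localization.Away g) g • f (v i) := by
        rw [map_smul, algebraMap_smul]
      rw [h4] at h3
      have hu : IsUnit (algebraMap A (Localization.Away g) g) :=
        IsLocalization.Away.algebraMap_isUnit g
      exact (Submodule.smul_mem_iff_of_isUnit W hu).1 h3
  refine Module.Free.of_basis (Module.Basis.mk hli2 ?_)
  have h5 : ∀ q : Q, f q ∈ W := by
    have : (⊤ : Submodule A Q) ≤ (W.restrictScalars A).comap f := by
      rw [← hv, Submodule.span_le]
      rintro _ ⟨j, rfl⟩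
      exact hmem j
    exact fun q => this trivial
  intro z _
  induction z using TensorProduct.induction_on with
  | zero => exact Submodule.zero_mem _
  | add a b ha hb => exact Submodule.add_mem _ (ha trivial) (hb trivial)
  | tmul a q =>
    have : a ⊗ₜ[A] q = a • f q := by simp [f, TensorProduct.smul_tmul']
    rw [this]
    exact Submodule.smul_mem _ _ (h5 q)

/-- Dickson. -/
lemma dickson {m : ℕ} (S : Set (Fin m →₀ ℕ)) :
    ∃ F : Finset (Fin m →₀ ℕ), (∀ a ∈ F, a ∈ S) ∧ ∀ a ∈ S, ∃ b ∈ F, b ≤ a := by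
  have hfin : {a | Minimal (· ∈ S) a}.Finite :=
    (wellQuasiOrderedLE_iff.1 inferInstance).2 _ (setOfPred_minimal_antichain (· ∈ S))
  refine ⟨hfin.toFinset, fun a ha => ?_, fun a ha => ?_⟩
  · exact (hfin.mem_toFinset.1 ha).1
  · obtain ⟨b, hb, hb'⟩ := exists_minimal_le_of_wellFoundedLT (· ∈ S) a ha
    exact ⟨b, hfin.mem_toFinset.2 hb', hb⟩

/-- monomials -/
noncomputable def mon {T : Type} [CommRing T] {m : ℕ} (x : Fin m → T) (α : Fin m →₀ ℕ) : T :=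
  α.prod fun k e => x k ^ e

section
variable {T : Type} [CommRing T] {m : ℕ} (x : Fin m → T)

lemma mon_zero : mon x 0 = 1 := by simp [mon]

lemma mon_add (α β : Fin m →₀ ℕ) : mon x (α + β) = mon x α * mon x β :=
  Finsupp.prod_add_index' (by simp) (by intros; rw [pow_add])

lemma mon_single (k : Fin m) (e : ℕ) : mon x (Finsupp.single k e) = x k ^ e := by
  simp [mon]

lemma mon_mem {I : Ideal T} (hx : ∀ k, x k ∈ I) (α : Fin m →₀ ℕ) : mon x α ∈ I ^ α.degree := by
  induction α using Finsupp.induction_linear with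
  | zero => simp
  | add a b ha hb => rw [mon_add, map_add, pow_add]; exact Ideal.mul_mem_mul ha hb
  | single k e => rw [mon_single, Finsupp.degree_single]; exact Ideal.pow_mem_pow (hx k) e

end

/-- index type -/
abbrev Idx (m q : ℕ) : Type := DegLex (Fin m →₀ ℕ) ×ₗ Fin q

/-- exponent -/
def ex {m q : ℕ} (i : Idx m q) : Fin m →₀ ℕ := ofDegLex (ofLex i).1
/-- generator -/
def ge {m q : ℕ} (i : Idx m q) : Fin q := (ofLex i).2
/-- constructor -/
def mk {m q : ℕ} (a : Fin m →₀ ℕ) (j : Fin q) : Idx m q := toLex (toDegLex a, j)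

lemma deg_le_of_lt {m q : ℕ} {i j : Idx m q} (h : i < j) : (ex i).degree ≤ (ex j).degree := by
  rw [Prod.Lex.lt_iff] at h
  rcases h with h | h
  · exact Finsupp.DegLex.monotone_degree h.le
  · exact Finsupp.DegLex.monotone_degree h.1.le

lemma lt_of_deg_lt {m q : ℕ} {i j : Idx m q} (h : (ex i).degree < (ex j).degree) : i < j := by
  rw [Prod.Lex.lt_iff]
  exact Or.inl (Finsupp.DegLex.lt_iff.2 (Or.inl h))

lemma add_lt {m q : ℕ} {i j : Idx m q} (h : i < j) (c : Fin m →₀ ℕ) :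
    mk (c + ex i) (ge i) < mk (c + ex j) (ge j) := by
  rw [Prod.Lex.lt_iff] at h ⊢
  rcases h with h | h
  · exact Or.inl (add_lt_add_right (α := DegLex (Fin m →₀ ℕ)) h (toDegLex c))
  · refine Or.inr ⟨?_, h.2⟩
    exact congrArg (fun z : DegLex (Fin m →₀ ℕ) => toDegLex c + z) h.1

section main
variable {A : Type} [CommRing A] {T : Type} [CommRing T] [Algebra A T]
  {M : Type} [AddCommGroup M] [Module T M] [Module A M] [IsScalarTower A T M]
  (I : Ideal T) {m q : ℕ} (x : Fin m → T) (y : Fin q → M)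

/-- element -/
noncomputable def v (i : Idx m q) : M := mon x (ex i) • y (ge i)

variable (A) in
/-- powers -/
def P (M : Type) [AddCommGroup M] [Module T M] [Module A M] [IsScalarTower A T M] (n : ℕ) :
    Submodule A M := (I ^ n • ⊤ : Submodule T M).restrictScalars A

/-- multiplication -/
def mul (A : Type) [CommRing A] {T : Type} [CommRing T] [Algebra A T]
  (M : Type) [AddCommGroup M] [Module T M] [Module A M] [IsScalarTower A T M] (t : T) :
  M →ₗ[A] M := (LinearMap.lsmul T M t).restrictScalars A

lemma P_mul {t : T} {k n : ℕ} (ht : t ∈ I ^ k) : P A I M n ≤ (P A I M (k + n)).comap (mul A M t) := by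
  intro w hw
  change t • w ∈ I ^ (k + n) • (⊤ : Submodule T M)
  rw [pow_add, Submodule.mul_smul]
  exact Submodule.smul_mem_smul ht hw

lemma P_anti {k n : ℕ} (h : k ≤ n) : P A I M n ≤ P A I M k :=
  fun _ hw => Submodule.smul_mono_left (Ideal.pow_le_pow_right h) hw

lemma v_mem (hx : ∀ k, x k ∈ I) (i : Idx m q) : v x y i ∈ P A I M (ex i).degree :=
  have h : mon x (ex i) • y (ge i) ∈ (I ^ (ex i).degree • ⊤ : Submodule T M) :=
    Submodule.smul_mem_smul (mon_mem x hx _) Submodule.mem_top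
  h

lemma mon_v (c : Fin m →₀ ℕ) (i : Idx m q) :
    mon x c • v x y i = v x y (mk (c + ex i) (ge i)) := by
  change mon x c • (mon x (ex i) • y (ge i)) = mon x (c + ex i) • y (ge i)
  rw [mon_add, mul_smul]

lemma step (hx : Ideal.span (Set.range x) = I)
    (hy : ⊤ ≤ Submodule.span A (Set.range y) ⊔ P A I M 1) (k : ℕ) :
    P A I M k ≤ Submodule.span A (v x y '' {i | (ex i).degree = k}) ⊔ P A I M (k + 1) := by
  have hxI : ∀ l, x l ∈ I := fun l => hx ▸ Ideal.subset_span ⟨l, rfl⟩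
  induction k with
  | zero =>
    refine le_trans le_top (hy.trans (sup_le_sup_right ?_ _))
    apply Submodule.span_mono
    rintro _ ⟨j, rfl⟩
    refine ⟨mk 0 j, ?_, ?_⟩
    · change Finsupp.degree 0 = 0
      simp
    · change mon x 0 • y j = y j
      rw [mon_zero, one_smul]
  | succ k ih =>
    set R := Submodule.span A (v x y '' {i | (ex i).degree = k + 1}) ⊔ P A I M (k + 1 + 1)
    have key : ∀ r ∈ I, ∀ n ∈ P A I M k, r • n ∈ R := by
      intro r hr
      rw [← hx] at hr
      induction hr using Submodule.span_induction with
      | mem r hr =>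
        obtain ⟨l, rfl⟩ := hr
        have : P A I M k ≤ R.comap (mul A M (x l)) := by
          refine ih.trans (sup_le ?_ ?_)
          · rw [Submodule.span_le]
            rintro _ ⟨i, hi, rfl⟩
            apply Submodule.mem_sup_left
            apply Submodule.subset_span
            refine ⟨mk (Finsupp.single l 1 + ex i) (ge i), ?_, ?_⟩
            · change (Finsupp.single l 1 + ex i).degree = k + 1
              rw [map_add, Finsupp.degree_single, hi, add_comm]
            · rw [← mon_v, mon_single, pow_one]; rfl
          · have h1 := P_mul (A := A) (M := M) I (t := x l) (k := 1) (n := k + 1)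
              (by simpa using hxI l)
            refine h1.trans (Submodule.comap_mono ?_)
            rw [add_comm 1]
            exact le_sup_right
        exact fun n hn => this hn
      | zero => intro n _; rw [zero_smul]; exact Submodule.zero_mem _
      | add a b _ _ ha hb =>
        intro n hn; rw [add_smul]; exact Submodule.add_mem _ (ha n hn) (hb n hn)
      | smul a b _ hb =>
        intro n hn
        rw [smul_eq_mul, mul_comm, mul_smul]
        exact hb _ (Submodule.smul_mem (I ^ k • ⊤ : Submodule T M) a hn)
    intro w hw
    change w ∈ I ^ (k + 1) • (⊤ : Submodule T M) at hw
    rw [pow_succ', Submodule.mul_smul] at hw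
    exact Submodule.smul_induction_on hw key (fun _ _ => Submodule.add_mem _)

lemma steps (hx : Ideal.span (Set.range x) = I)
    (hy : ⊤ ≤ Submodule.span A (Set.range y) ⊔ P A I M 1) (k n : ℕ) :
    P A I M k ≤ Submodule.span A (v x y '' {i | k ≤ (ex i).degree ∧ (ex i).degree < n})
      ⊔ P A I M n := by
  rcases le_total n k with h | h
  · exact (P_anti I h).trans le_sup_right
  induction n, h using Nat.le_induction with
  | base => exact le_sup_right
  | succ n h ih =>
    refine ih.trans (sup_le (le_sup_of_le_left (Submodule.span_mono (Set.image_mono ?_))) ?_)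
    · rintro i ⟨h1, h2⟩; exact ⟨h1, by omega⟩
    · refine (step I x y hx hy n).trans (sup_le_sup_right (Submodule.span_mono
        (Set.image_mono ?_)) _)
      rintro i (hi : _ = _); exact ⟨by omega, by omega⟩

variable (A) in
/-- what lies beyond `i` -/
noncomputable def R (i : Idx m q) : Submodule A M :=
  Submodule.span A (v x y '' Set.Ioi i) ⊔ P A I M ((ex i).degree + 1)

lemma R_mul (hx : ∀ k, x k ∈ I) (i : Idx m q) (c : Fin m →₀ ℕ) :
    R A I x y i ≤ (R A I x y (mk (c + ex i) (ge i))).comap (mul A M (mon x c)) := by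
  refine sup_le ?_ ?_
  · rw [Submodule.span_le]
    rintro _ ⟨j, hj, rfl⟩
    refine Submodule.mem_sup_left (Submodule.subset_span ⟨_, add_lt hj c, ?_⟩)
    rw [← mon_v]; rfl
  · refine (P_mul I (mon_mem x hx c)).trans (Submodule.comap_mono ?_)
    refine le_trans (le_of_eq ?_) le_sup_right
    congr 1
    change _ = (c + ex i).degree + 1
    rw [map_add, add_assoc]

theorem main [IsDomain A] (hx : Ideal.span (Set.range x) = I)
    (hy : ⊤ ≤ Submodule.span A (Set.range y) ⊔ P A I M 1) :
    ∃ g : A, g ≠ 0 ∧ ∀ (n : ℕ) (Q : Type) [AddCommGroup Q] [Module A Q] (π : M →ₗ[A] Q),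
      Function.Surjective π → LinearMap.ker π = P A I M n →
      Module.Free (Localization.Away g) (Localization.Away g ⊗[A] Q) := by
  classical
  have hxI : ∀ l, x l ∈ I := fun l => hx ▸ Ideal.subset_span ⟨l, rfl⟩
  let bad : Idx m q → Prop := fun i => ∃ a : A, a ≠ 0 ∧ a • v x y i ∈ R A I x y i
  have hg : ∃ g : A, g ≠ 0 ∧ ∀ i, bad i → g • v x y i ∈ R A I x y i := by
    have hj : ∀ j : Fin q, ∃ g : A, g ≠ 0 ∧ ∀ α, bad (mk α j) →
        g • v x y (mk α j) ∈ R A I x y (mk α j) := by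
      intro j
      obtain ⟨F, hF, hF'⟩ := dickson {α : Fin m →₀ ℕ | bad (mk α j)}
      choose! a ha ha' using hF
      refine ⟨∏ b ∈ F, a b, Finset.prod_ne_zero_iff.2 ha, fun α hα => ?_⟩
      obtain ⟨b, hb, hba⟩ := hF' α hα
      have h1 := R_mul (A := A) I x y hxI (mk b j) (α - b) (ha' b hb)
      have h2 : mk ((α - b) + ex (mk b j : Idx m q)) (ge (mk b j : Idx m q)) = mk α j := by
        change mk ((α - b) + b) j = mk α j
        rw [tsub_add_cancel_of_le hba]
      rw [Submodule.mem_comap, map_smul] at h1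
      change a b • (mon x (α - b) • v x y (mk b j)) ∈ _ at h1
      rw [mon_v, h2] at h1
      rw [← Finset.prod_erase_mul _ _ hb, mul_smul]
      exact Submodule.smul_mem _ _ h1
    choose g hg hg' using hj
    refine ⟨∏ j, g j, Finset.prod_ne_zero_iff.2 fun j _ => hg j, fun i hi => ?_⟩
    rw [← Finset.prod_erase_mul _ _ (Finset.mem_univ (ge i)), mul_smul]
    exact Submodule.smul_mem _ _ (hg' (ge i) (ex i) hi)
  obtain ⟨g, hg0, hg⟩ := hg
  refine ⟨g, hg0, fun n Q _ _ π hπ hker => ?_⟩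
  let J : Type := {i : Idx m q // (ex i).degree < n}
  have : Finite J := by
    have h1 : Finite {a : Fin m →₀ ℕ // a.degree < n} := (Finsupp.finite_of_degree_lt n).to_subtype
    refine Finite.of_injective
      (fun i : J => ((⟨ex i.1, i.2⟩, ge i.1) : {a : Fin m →₀ ℕ // a.degree < n} × Fin q)) ?_
    rintro ⟨i, hi⟩ ⟨i', hi'⟩ h
    simp only [Prod.mk.injEq, Subtype.mk.injEq] at h
    apply Subtype.ext
    exact Prod.ext h.1 h.2
  have hP : ∀ w ∈ P A I M n, π w = 0 := fun w hw => LinearMap.mem_ker.1 (hker ▸ hw)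
  refine free_of_filtration (fun i : J => π (v x y i.1)) ?_ g ?_
  · rw [eq_top_iff]
    rintro z -
    obtain ⟨w, rfl⟩ := hπ z
    have h0 : w ∈ P A I M 0 := by
      change w ∈ I ^ 0 • (⊤ : Submodule T M)
      simp
    have h1 : P A I M 0 ≤ (Submodule.span A (Set.range fun i : J => π (v x y i.1))).comap π := by
      refine (steps I x y hx hy 0 n).trans (sup_le ?_ ?_)
      · rw [Submodule.span_le]
        rintro _ ⟨i, hi, rfl⟩
        exact Submodule.subset_span ⟨⟨i, hi.2⟩, rfl⟩
      · intro w hw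
        rw [Submodule.mem_comap, hP w hw]
        exact Submodule.zero_mem _
    exact h1 h0
  · intro i
    have hle : R A I x y i.1 ≤
        (Submodule.span A ((fun i : J => π (v x y i.1)) '' Set.Ioi i)).comap π := by
      refine sup_le ?_ ((steps I x y hx hy _ n).trans (sup_le ?_ ?_))
      · rw [Submodule.span_le]
        rintro _ ⟨j, hj, rfl⟩
        by_cases hjn : (ex j).degree < n
        · exact Submodule.subset_span ⟨⟨j, hjn⟩, hj, rfl⟩
        · rw [SetLike.mem_coe, Submodule.mem_comap, hP _ (P_anti I (not_lt.1 hjn) (v_mem I x y hxI j))]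
          exact Submodule.zero_mem _
      · rw [Submodule.span_le]
        rintro _ ⟨j, hj, rfl⟩
        exact Submodule.subset_span ⟨⟨j, hj.2⟩, lt_of_deg_lt (Nat.lt_of_succ_le hj.1), rfl⟩
      · intro w hw
        rw [Submodule.mem_comap, hP w hw]
        exact Submodule.zero_mem _
    by_cases hb : bad i.1
    · right
      have := hle (hg _ hb)
      rwa [Submodule.mem_comap, map_smul] at this
    · left
      intro a ha
      by_contra hne
      refine hb ⟨a, hne, ?_⟩
      have h1 : Submodule.span A ((fun i : J => π (v x y i.1)) '' Set.Ioi i) ≤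
          (Submodule.span A (v x y '' Set.Ioi i.1)).map π := by
        rw [Submodule.span_le]
        rintro _ ⟨j, hj, rfl⟩
        exact ⟨_, Submodule.subset_span ⟨j.1, hj, rfl⟩, rfl⟩
      obtain ⟨w, hw, hw'⟩ := h1 ha
      have h2 : a • v x y i.1 - w ∈ P A I M n := by
        rw [← hker, LinearMap.mem_ker, map_sub, map_smul, hw', sub_self]
      have h3 : a • v x y i.1 - w ∈ R A I x y i.1 :=
        Submodule.mem_sup_right (P_anti I i.2 h2)
      have := Submodule.add_mem _ h3 (Submodule.mem_sup_left hw)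
      rwa [sub_add_cancel] at this

end main

end GF

/-- **Simultaneous generic freeness.**  Let `A` be a domain, `T` a Noetherian `A`-algebra and
`I ⊆ T` an ideal with `T/I` a finitely generated `A`-module.  For every finitely generated
`T`-module `M` there is a nonzero `g ∈ A` such that `(M/IⁿM) ⊗[A] A_g` is a free `A_g`-module
for all `n ≥ 1`. -/
theorem stmt7 (A : Type) [CommRing A] [IsDomain A]
    (T : Type) [CommRing T] [Algebra A T] [IsNoetherianRing T]
    (I : Ideal T) [Module.Finite A (T ⧸ I)]
    (M : Type) [AddCommGroup M] [Module T M] [Module.Finite T M] :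
    ∃ g : A, g ≠ 0 ∧ ∀ n : ℕ, 1 ≤ n →
      Module.Free (Localization.Away g)
        (TensorProduct A (Localization.Away g)
          (RestrictScalars A T (M ⧸ (I ^ n • ⊤ : Submodule T M)))) := by
  let _ : Module A M := Module.compHom M (algebraMap A T)
  have : IsScalarTower A T M := ⟨fun a t z => by
    rw [Algebra.smul_def, mul_smul]; rfl⟩
  obtain ⟨m, x, hx⟩ := Submodule.fg_iff_exists_fin_generating_family.1
    (IsNoetherian.noetherian I)
  have hf : Module.Finite A (M ⧸ (I • ⊤ : Submodule T M)) :=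
    Module.Finite.trans (T ⧸ I) _
  obtain ⟨q, y', hy'⟩ := Module.Finite.exists_fin (R := A) (M := M ⧸ (I • ⊤ : Submodule T M))
  choose y hy using fun j => Submodule.Quotient.mk_surjective _ (y' j)
  have hyt : ⊤ ≤ Submodule.span A (Set.range y) ⊔ GF.P A I M 1 := by
    rintro z -
    let p : M →ₗ[A] M ⧸ (I • ⊤ : Submodule T M) :=
      (Submodule.mkQ (I • ⊤ : Submodule T M)).restrictScalars A
    have h1 : p z ∈ (Submodule.span A (Set.range y)).map p := by
      rw [Submodule.map_span, ← Set.range_comp]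
      have : p ∘ y = y' := funext hy
      rw [this, hy']
      trivial
    obtain ⟨w, hw, hw'⟩ := h1
    have h2 : z - w ∈ GF.P A I M 1 := by
      change z - w ∈ I ^ 1 • (⊤ : Submodule T M)
      rw [pow_one]
      exact (Submodule.Quotient.eq _).1 hw'.symm
    have := Submodule.add_mem _ (Submodule.mem_sup_right h2) (Submodule.mem_sup_left hw)
    rwa [sub_add_cancel] at this
  obtain ⟨g, hg, h⟩ := GF.main (A := A) I x y hx hyt
  refine ⟨g, hg, fun n _ => ?_⟩
  let π : M →ₗ[A] RestrictScalars A T (M ⧸ (I ^ n • ⊤ : Submodule T M)) :=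
    { toFun := fun z => (RestrictScalars.addEquiv A T _).symm (Submodule.Quotient.mk z)
      map_add' := fun _ _ => rfl
      map_smul' := fun _ _ => rfl }
  refine @h n _ _ (RestrictScalars.module A T (M ⧸ (I ^ n • ⊤ : Submodule T M))) π ?_ ?_
  · intro z
    obtain ⟨w, hw⟩ := Submodule.Quotient.mk_surjective _ (RestrictScalars.addEquiv A T _ z)
    exact ⟨w, hw⟩
  · ext z
    exact Submodule.Quotient.mk_eq_zero _
end
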